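/- arXiv:2006.14935 — 2 statements merged into one kernel-verified Lean document; each statement's English description precedes it below -/
import Mathlib

section
/- There exists a universal constant C > 0 with the following property. Let Γ be a discrete subgroup of SL(2,ℝ), acting on ℍ by Möbius transformations, and let H = {γ ∈ Γ : |tr γ| > 2} denote its set of hyperbolic elements. Suppose the systole s := inf over z ∈ ℍ and γ ∈ H of d(z, γ·z) is strictly positive. Then for every z ∈ ℍ and every j > 0, the set {γ ∈ H : d(z, γ·z) ≤ j} is finite and has cardinality at most C · e^j / min{1, s²}. -/
/-- The subspace topology on `SL(2, ℝ)` induced from the space of `2 × 2` real matrices. -/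
noncomputable instance : TopologicalSpace (Matrix.SpecialLinearGroup (Fin 2) ℝ) :=
  TopologicalSpace.induced ((↑) : _ → Matrix (Fin 2) (Fin 2) ℝ) inferInstance

namespace CH

abbrev SL2 := Matrix.SpecialLinearGroup (Fin 2) ℝ

def N (g : SL2) : ℝ := g 0 0 ^ 2 + g 0 1 ^ 2 + g 1 0 ^ 2 + g 1 1 ^ 2

def tr (g : SL2) : ℝ := g 0 0 + g 1 1

lemma mul00 (g h : SL2) : (g * h) 0 0 = g 0 0 * h 0 0 + g 0 1 * h 1 0 := by
  simp [Matrix.mul_apply, Fin.sum_univ_two]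
lemma mul01 (g h : SL2) : (g * h) 0 1 = g 0 0 * h 0 1 + g 0 1 * h 1 1 := by
  simp [Matrix.mul_apply, Fin.sum_univ_two]
lemma mul10 (g h : SL2) : (g * h) 1 0 = g 1 0 * h 0 0 + g 1 1 * h 1 0 := by
  simp [Matrix.mul_apply, Fin.sum_univ_two]
lemma mul11 (g h : SL2) : (g * h) 1 1 = g 1 0 * h 0 1 + g 1 1 * h 1 1 := by
  simp [Matrix.mul_apply, Fin.sum_univ_two]
lemma inv00 (g : SL2) : g⁻¹ 0 0 = g 1 1 := by
  rw [Matrix.SpecialLinearGroup.SL2_inv_expl]; simp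
lemma inv01 (g : SL2) : g⁻¹ 0 1 = - g 0 1 := by
  rw [Matrix.SpecialLinearGroup.SL2_inv_expl]; simp
lemma inv10 (g : SL2) : g⁻¹ 1 0 = - g 1 0 := by
  rw [Matrix.SpecialLinearGroup.SL2_inv_expl]; simp
lemma inv11 (g : SL2) : g⁻¹ 1 1 = g 0 0 := by
  rw [Matrix.SpecialLinearGroup.SL2_inv_expl]; simp
lemma det1 (g : SL2) : g 0 0 * g 1 1 - g 0 1 * g 1 0 = 1 := by
  have := g.det_coe
  rwa [Matrix.det_fin_two] at this
lemma ext4 {g h : SL2} (h0 : g 0 0 = h 0 0) (h1 : g 0 1 = h 0 1) (h2 : g 1 0 = h 1 0)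
    (h3 : g 1 1 = h 1 1) : g = h := by
  ext i j; fin_cases i <;> fin_cases j <;> assumption
lemma trace_eq (g : SL2) : Matrix.trace (g : Matrix (Fin 2) (Fin 2) ℝ) = tr g := by
  simp [Matrix.trace_fin_two, tr]

/-- bounded subsets are finite -/
def FinB (Γ : Subgroup SL2) : Prop := ∀ R : ℝ, {g : SL2 | g ∈ Γ ∧ N g ≤ R}.Finite

lemma finB_of_discrete (Γ : Subgroup SL2) (h : DiscreteTopology Γ) : FinB Γ := by
  intro R
  have hcl : IsClosed (Γ : Set SL2) := by
    have : DiscreteTopology Γ := h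
    have := @Subgroup.isClosed_of_discrete SL2 _ Matrix.SpecialLinearGroup.instTopologicalSpace _ _ Γ h
    exact this
  have hemb : Topology.IsClosedEmbedding (fun g : SL2 => (g : Matrix (Fin 2) (Fin 2) ℝ)) := by
    refine ⟨⟨⟨rfl⟩, fun a b hab => Subtype.ext hab⟩, ?_⟩
    have : Set.range (fun g : SL2 => (g : Matrix (Fin 2) (Fin 2) ℝ)) =
      {M : Matrix (Fin 2) (Fin 2) ℝ | M.det = 1} := by
      ext M; constructor
      · rintro ⟨g, rfl⟩; exact g.2
      · intro hM; exact ⟨⟨M, hM⟩, rfl⟩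
    rw [this]
    exact isClosed_eq (by fun_prop) continuous_const
  have hK : IsCompact {g : SL2 | N g ≤ R} := by
    have : {g : SL2 | N g ≤ R} = (fun g : SL2 => (g : Matrix (Fin 2) (Fin 2) ℝ)) ⁻¹'
      ({M : Matrix (Fin 2) (Fin 2) ℝ | M 0 0 ^ 2 + M 0 1 ^ 2 + M 1 0 ^ 2 + M 1 1 ^ 2 ≤ R}) := rfl
    rw [this]
    apply hemb.isCompact_preimage
    have hc : IsCompact (Set.pi Set.univ (fun _ : Fin 2 => Set.pi Set.univ (fun _ : Fin 2 => Set.Icc (-(R+1)) (R+1)))) :=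
      isCompact_univ_pi (fun _ => isCompact_univ_pi (fun _ => isCompact_Icc))
    refine IsCompact.of_isClosed_subset hc (isClosed_le (by fun_prop) continuous_const) ?_
    intro M hM
    simp only [Set.mem_ofPred_eq] at hM
    have key : ∀ i j, M i j ^ 2 ≤ R := by
      intro i j
      fin_cases i <;> fin_cases j <;> simp <;> nlinarith [sq_nonneg (M 0 0), sq_nonneg (M 0 1), sq_nonneg (M 1 0), sq_nonneg (M 1 1)]
    intro i _ j _
    have := key i j
    constructor <;> nlinarith [sq_nonneg (M i j - 1), sq_nonneg (M i j + 1)]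
  have hc2 : IsCompact ((Γ : Set SL2) ∩ {g : SL2 | N g ≤ R}) := hK.inter_left hcl
  refine hc2.finite ?_
  have : IsDiscrete (Γ : Set SL2) := ⟨h⟩
  exact this.mono Set.inter_subset_left

/-- pigeonhole on a real-valued function -/
lemma pigeon {α : Type*} (s : Finset α) (f : α → ℝ) (lo hi ε B : ℝ) (hε : 0 < ε)
    (hB : 0 ≤ B) (hlh : lo ≤ hi)
    (hf : ∀ x ∈ s, lo ≤ f x ∧ f x ≤ hi)
    (h : ∀ t ⊆ s, (∀ x ∈ t, ∀ y ∈ t, |f x - f y| < ε) → (t.card : ℝ) ≤ B) :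
    (s.card : ℝ) ≤ ((hi - lo) / ε + 1) * B := by
  classical
  let F : α → ℕ := fun x => ⌊(f x - lo) / ε⌋₊
  have hnn : ∀ x ∈ s, 0 ≤ (f x - lo) / ε := fun x hx => div_nonneg (by linarith [(hf x hx).1]) hε.le
  have hmap : ∀ x ∈ s, F x ∈ Finset.range (⌊(hi - lo) / ε⌋₊ + 1) := by
    intro x hx
    rw [Finset.mem_range, Nat.lt_succ_iff]
    apply Nat.floor_le_floor
    gcongr
    exact (hf x hx).2
  rw [Finset.card_eq_sum_card_fiberwise (f := F) (t := Finset.range (⌊(hi - lo) / ε⌋₊ + 1)) hmap]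
  push_cast
  calc _ ≤ ∑ k ∈ Finset.range (⌊(hi - lo) / ε⌋₊ + 1), B := by
        apply Finset.sum_le_sum
        intro k _
        apply h _ (Finset.filter_subset _ _)
        intro x hx y hy
        rw [Finset.mem_filter] at hx hy
        have h1 := Nat.floor_le (hnn x hx.1)
        have h2 := Nat.lt_floor_add_one ((f x - lo) / ε)
        have h3 := Nat.floor_le (hnn y hy.1)
        have h4 := Nat.lt_floor_add_one ((f y - lo) / ε)
        have hx2 : ⌊(f x - lo) / ε⌋₊ = k := hx.2
        have hy2 : ⌊(f y - lo) / ε⌋₊ = k := hy.2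
        rw [hx2] at h1 h2
        rw [hy2] at h3 h4
        rw [le_div_iff₀ hε] at h1 h3
        rw [div_lt_iff₀ hε] at h2 h4
        rw [abs_lt]; constructor <;> linarith
    _ = ((⌊(hi - lo) / ε⌋₊ : ℝ) + 1) * B := by simp
    _ ≤ _ := by
      gcongr
      exact Nat.floor_le (div_nonneg (by linarith) hε.le)

/-- dyadic decomposition -/
lemma dyadic {α : Type*} (s : Finset α) (f : α → ℝ) (M B : ℝ) (hB : 0 ≤ B) (hM : 1 ≤ M)
    (hf : ∀ x ∈ s, 1 ≤ f x ∧ f x ≤ M)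
    (h : ∀ ρ : ℝ, 1 ≤ ρ → ∀ t ⊆ s, (∀ x ∈ t, ρ ≤ f x ∧ f x ≤ 2 * ρ) → (t.card : ℝ) ≤ B * ρ) :
    (s.card : ℝ) ≤ 2 * B * M := by
  classical
  let F : α → ℕ := fun x => Nat.log 2 ⌊f x⌋₊
  have hmap : ∀ x ∈ s, F x ∈ Finset.range (Nat.log 2 ⌊M⌋₊ + 1) := by
    intro x hx
    rw [Finset.mem_range, Nat.lt_succ_iff]
    exact Nat.log_mono_right (Nat.floor_le_floor (hf x hx).2)
  rw [Finset.card_eq_sum_card_fiberwise (f := F) (t := Finset.range (Nat.log 2 ⌊M⌋₊ + 1)) hmap]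
  push_cast
  calc _ ≤ ∑ k ∈ Finset.range (Nat.log 2 ⌊M⌋₊ + 1), B * 2 ^ k := by
        apply Finset.sum_le_sum
        intro k _
        apply h _ (one_le_pow₀ (by norm_num)) _ (Finset.filter_subset _ _)
        intro x hx
        rw [Finset.mem_filter] at hx
        have hx2 : Nat.log 2 ⌊f x⌋₊ = k := hx.2
        have hx1 := (hf x hx.1).1
        have hne : ⌊f x⌋₊ ≠ 0 := by
          have := (Nat.one_le_floor_iff (f x)).2 hx1
          omega
        have h1 : 2 ^ k ≤ ⌊f x⌋₊ := by rw [← hx2]; exact Nat.pow_log_le_self 2 hne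
        have h2 : ⌊f x⌋₊ < 2 ^ (k+1) := by rw [← hx2]; exact Nat.lt_pow_succ_log_self (by norm_num) _
        have h3 := Nat.floor_le (zero_le_one.trans hx1)
        constructor
        · refine le_trans ?_ h3
          exact_mod_cast h1
        · have := (Nat.floor_lt (zero_le_one.trans hx1)).1 h2
          push_cast at this
          rw [pow_succ] at this; linarith
    _ = B * (2 ^ (Nat.log 2 ⌊M⌋₊ + 1) - 1) := by
      rw [← Finset.mul_sum, geom_sum_eq (by norm_num)]; norm_num
    _ ≤ 2 * B * M := by
      have hne : ⌊M⌋₊ ≠ 0 := by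
        have := (Nat.one_le_floor_iff M).2 hM
        omega
      have h1 : ((2 ^ (Nat.log 2 ⌊M⌋₊) : ℕ) : ℝ) ≤ M :=
        le_trans (by exact_mod_cast Nat.pow_log_le_self 2 hne) (Nat.floor_le (zero_le_one.trans hM))
      push_cast at h1
      rw [pow_succ]
      nlinarith
noncomputable def TT (g : SL2) : ℝ := g 1 0 ^ 2 + g 1 1 ^ 2
noncomputable def xx (g : SL2) : ℝ := (g 0 0 * g 1 0 + g 0 1 * g 1 1) / TT g
noncomputable def yy (g : SL2) : ℝ := 1 / TT g
noncomputable def ph (g : SL2) : ℝ := Complex.arg ⟨g 1 1, g 1 0⟩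

lemma TT_pos (g : SL2) : 0 < TT g := by
  unfold TT
  have h := det1 g
  by_contra hc
  have h1 : g 1 0 = 0 := by nlinarith [sq_nonneg (g 1 0), sq_nonneg (g 1 1)]
  have h2 : g 1 1 = 0 := by nlinarith [sq_nonneg (g 1 0), sq_nonneg (g 1 1)]
  rw [h1, h2] at h; simp at h

lemma yT (g : SL2) : yy g * (g 1 0 ^ 2 + g 1 1 ^ 2) = 1 := by
  have := TT_pos g
  change 1 / TT g * TT g = 1
  field_simp

lemma a_eq (g : SL2) : g 0 0 = xx g * g 1 0 + yy g * g 1 1 := by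
  have := TT_pos g
  have hd := det1 g
  unfold xx yy
  field_simp
  unfold TT
  linear_combination (g 1 1) * hd

lemma b_eq (g : SL2) : g 0 1 = xx g * g 1 1 - yy g * g 1 0 := by
  have := TT_pos g
  have hd := det1 g
  unfold xx yy
  field_simp
  unfold TT
  linear_combination (-g 1 0) * hd

lemma c_eq (g : SL2) : g 1 0 = √(TT g) * Real.sin (ph g) := by
  have h := Complex.norm_mul_sin_arg ⟨g 1 1, g 1 0⟩
  have hn : ‖(⟨g 1 1, g 1 0⟩ : ℂ)‖ = √(TT g) := by
    rw [Complex.norm_def, Complex.normSq_mk]; unfold TT; congr 1; ring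
  rw [hn] at h; exact h.symm

lemma d_eq (g : SL2) : g 1 1 = √(TT g) * Real.cos (ph g) := by
  have h := Complex.norm_mul_cos_arg ⟨g 1 1, g 1 0⟩
  have hn : ‖(⟨g 1 1, g 1 0⟩ : ℂ)‖ = √(TT g) := by
    rw [Complex.norm_def, Complex.normSq_mk]; unfold TT; congr 1; ring
  rw [hn] at h; exact h.symm

set_option maxHeartbeats 1000000 in
lemma A1 (Γ : Subgroup SL2) (σ : ℝ) (hσ : 0 < σ) (hσ1 : σ ≤ 1)
    (hyp : ∀ h ∈ Γ, 2 < |tr h| → σ ^ 2 ≤ N h - 2)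
    (ell : ∀ h ∈ Γ, |tr h| ≤ 2 → |h 0 1 - h 1 0| < 1 / 16 →
      h 0 1 = 0 ∧ h 1 0 = 0 ∧ h 0 0 = h 1 1)
    (ρ : ℝ) (hρ : 0 < ρ) (g k : SL2) (hg : g ∈ Γ) (hk : k ∈ Γ)
    (hg1 : ρ ≤ √(TT g)) (hg2 : √(TT g) ≤ 2 * ρ) (hk1 : ρ ≤ √(TT k)) (hk2 : √(TT k) ≤ 2 * ρ)
    (hx : |xx g - xx k| < σ / (200 * ρ ^ 2)) (hy : |yy g - yy k| < σ / (200 * ρ ^ 2))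
    (hph : |ph g - ph k| < 1 / 400) : g = k := by
  have hm : g⁻¹ * k ∈ Γ := Γ.mul_mem (Γ.inv_mem hg) hk
  have e00 : (g⁻¹ * k) 0 0 = g 1 1 * k 0 0 - g 0 1 * k 1 0 := by
    rw [mul00, inv00, inv01]; ring
  have e01 : (g⁻¹ * k) 0 1 = g 1 1 * k 0 1 - g 0 1 * k 1 1 := by
    rw [mul01, inv00, inv01]; ring
  have e10 : (g⁻¹ * k) 1 0 = - g 1 0 * k 0 0 + g 0 0 * k 1 0 := by
    rw [mul10, inv10, inv11]
  have e11 : (g⁻¹ * k) 1 1 = - g 1 0 * k 0 1 + g 0 0 * k 1 1 := by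
    rw [mul11, inv10, inv11]
  have hag := a_eq g
  have hbg := b_eq g
  have hak := a_eq k
  have hbk := b_eq k
  have hyg := yT g
  have hyk := yT k
  have hTg := TT_pos g
  have hTk := TT_pos k
  have hsg : √(TT g) ^ 2 = TT g := Real.sq_sqrt hTg.le
  have hsk : √(TT k) ^ 2 = TT k := Real.sq_sqrt hTk.le
  have hTg2 : TT g ≤ 4 * ρ ^ 2 := by
    have := pow_le_pow_left₀ (Real.sqrt_nonneg _) hg2 2
    rw [hsg] at this; linarith
  have hTk2 : TT k ≤ 4 * ρ ^ 2 := by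
    have := pow_le_pow_left₀ (Real.sqrt_nonneg _) hk2 2
    rw [hsk] at this; linarith
  have hTg1 : ρ ^ 2 ≤ TT g := by
    have := pow_le_pow_left₀ hρ.le hg1 2
    rwa [hsg] at this
  have hTk1 : ρ ^ 2 ≤ TT k := by
    have := pow_le_pow_left₀ hρ.le hk1 2
    rwa [hsk] at this
  have hN : N (g⁻¹ * k) - 2 = TT g * TT k * ((xx g - xx k) ^ 2 + (yy g - yy k) ^ 2) := by
    unfold N TT
    rw [e00, e01, e10, e11, hag, hbg, hak, hbk]
    generalize g 1 0 = c at *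
    generalize g 1 1 = d at *
    generalize k 1 0 = c' at *
    generalize k 1 1 = d' at *
    generalize xx g = x at *
    generalize xx k = x' at *
    generalize yy g = y at *
    generalize yy k = y' at *
    linear_combination 2 * hyg + 2 * y * (c ^ 2 + d ^ 2) * hyk
  have hlt : N (g⁻¹ * k) - 2 < σ ^ 2 := by
    rw [hN]
    have h1 : (xx g - xx k) ^ 2 ≤ (σ / (200 * ρ ^ 2)) ^ 2 := sq_le_sq' (by linarith [(abs_lt.1 hx).1]) (abs_lt.1 hx).2.le
    have h2 : (yy g - yy k) ^ 2 ≤ (σ / (200 * ρ ^ 2)) ^ 2 := sq_le_sq' (by linarith [(abs_lt.1 hy).1]) (abs_lt.1 hy).2.le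
    calc _ ≤ (4 * ρ ^ 2) * (4 * ρ ^ 2) * ((σ / (200 * ρ ^ 2)) ^ 2 + (σ / (200 * ρ ^ 2)) ^ 2) := by gcongr
      _ = σ ^ 2 * (32 / 40000) := by field_simp; norm_num
      _ < σ ^ 2 := by linarith only [pow_pos hσ 2]
  have htr : |tr (g⁻¹ * k)| ≤ 2 := by
    by_contra hc
    push Not at hc
    linarith [hyp _ hm hc]
  have hsin := Real.sin_sub (ph g) (ph k)
  have hcos := Real.cos_sub (ph g) (ph k)
  have cg := c_eq g
  have dg := d_eq g
  have ck := c_eq k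
  have dk := d_eq k
  have hdiff : (g⁻¹ * k) 0 1 - (g⁻¹ * k) 1 0 = √(TT g) * √(TT k) *
      ((xx k - xx g) * Real.cos (ph g - ph k) + (yy g + yy k) * Real.sin (ph g - ph k)) := by
    rw [e01, e10, hag, hbg, hak, hbk, hsin, hcos, cg, dg, ck, dk]
    ring
  have hrr : √(TT g) * √(TT k) ≤ 4 * ρ ^ 2 := by
    have := mul_le_mul hg2 hk2 (Real.sqrt_nonneg _) (by positivity)
    linarith
  have hrr0 : 0 < √(TT g) * √(TT k) := mul_pos (by linarith) (by linarith)
  have hyg2 : yy g ≤ 1 / ρ ^ 2 := by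
    unfold yy; exact one_div_le_one_div_of_le (by positivity) hTg1
  have hyk2 : yy k ≤ 1 / ρ ^ 2 := by
    unfold yy; exact one_div_le_one_div_of_le (by positivity) hTk1
  have hyg0 : 0 < yy g := by unfold yy; positivity
  have hyk0 : 0 < yy k := by unfold yy; positivity
  have hbd : |(g⁻¹ * k) 0 1 - (g⁻¹ * k) 1 0| < 1 / 16 := by
    rw [hdiff, abs_mul, abs_of_pos hrr0]
    have hs1 : |Real.sin (ph g - ph k)| ≤ 1 / 400 := (Real.abs_sin_le_abs).trans hph.le
    have hc1 := Real.abs_cos_le_one (ph g - ph k)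
    calc _ ≤ (4 * ρ ^ 2) * (σ / (200 * ρ ^ 2) * 1 + (1 / ρ ^ 2 + 1 / ρ ^ 2) * (1 / 400)) := by
          gcongr
          refine (abs_add_le _ _).trans ?_
          rw [abs_mul, abs_mul, abs_of_pos (add_pos hyg0 hyk0), abs_sub_comm]
          gcongr
      _ = σ * (4 / 200) + 8 / 400 := by field_simp; ring
      _ < 1 / 16 := by linarith
  obtain ⟨q1, q2, q3⟩ := ell _ hm htr hbd
  have hdt := det1 (g⁻¹ * k)
  rw [q1, q3] at hdt
  have hcp : 0 < Real.cos (ph g - ph k) := by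
    have := abs_lt.1 hph
    apply Real.cos_pos_of_mem_Ioo
    constructor <;> linarith [Real.pi_gt_three]
  have htrp : 0 < (g⁻¹ * k) 0 0 + (g⁻¹ * k) 1 1 := by
    have : (g⁻¹ * k) 0 0 + (g⁻¹ * k) 1 1 = √(TT g) * √(TT k) *
      ((yy g + yy k) * Real.cos (ph g - ph k) - (xx k - xx g) * Real.sin (ph g - ph k)) := by
      rw [e00, e11, hag, hbg, hak, hbk, hsin, hcos, cg, dg, ck, dk]
      ring
    rw [this]
    apply mul_pos hrr0
    -- scalar matrix : use difference zero
    have hz : (xx k - xx g) * Real.cos (ph g - ph k) + (yy g + yy k) * Real.sin (ph g - ph k) = 0 := by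
      have := hdiff
      rw [q1, q2] at this
      have h0 := mul_eq_zero.1 (this.symm.trans (by norm_num))
      exact h0.resolve_left hrr0.ne'
    have hsc := Real.sin_sq_add_cos_sq (ph g - ph k)
    have hh : ((yy g + yy k) * Real.cos (ph g - ph k) - (xx k - xx g) * Real.sin (ph g - ph k)) * Real.cos (ph g - ph k) = (yy g + yy k) := by
      linear_combination (-Real.sin (ph g - ph k)) * hz + (yy g + yy k) * hsc
    by_contra hneg
    push Not at hneg
    have := mul_nonpos_of_nonpos_of_nonneg hneg hcp.le
    linarith
  have h11 : (g⁻¹ * k) 1 1 = 1 := by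
    rw [q3] at htrp
    have h2 : ((g⁻¹ * k) 1 1 - 1) * ((g⁻¹ * k) 1 1 + 1) = 0 := by linear_combination hdt
    rcases mul_eq_zero.1 h2 with h | h <;> linarith
  have h1 : g⁻¹ * k = 1 := by
    apply ext4
    · rw [q3, h11]; simp
    · rw [q1]; simp
    · rw [q2]; simp
    · rw [h11]; simp
  exact (inv_mul_eq_one.1 h1)

lemma caseA (Γ : Subgroup SL2) (σ : ℝ) (hσ : 0 < σ) (hσ1 : σ ≤ 1)
    (hyp : ∀ h ∈ Γ, 2 < |tr h| → σ ^ 2 ≤ N h - 2)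
    (ell : ∀ h ∈ Γ, |tr h| ≤ 2 → |h 0 1 - h 1 0| < 1 / 16 →
      h 0 1 = 0 ∧ h 1 0 = 0 ∧ h 0 0 = h 1 1)
    (R : ℝ) (hR : 1 ≤ R) (s : Finset SL2) (hs : ∀ g ∈ s, g ∈ Γ ∧ N g ≤ R ^ 2) :
    (s.card : ℝ) ≤ 10 ^ 9 * R ^ 2 / σ ^ 2 := by
  have hR0 : 0 < R := by linarith
  have main : (s.card : ℝ) ≤ 2 * (401 * 201 * 3201 / σ ^ 2) * R ^ 2 := by
    apply dyadic s (fun g => R * √(TT g)) (R ^ 2) (401 * 201 * 3201 / σ ^ 2) (by positivity) (by nlinarith)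
    · intro g hg
      have hN := (hs g hg).2
      have hT := TT_pos g
      have hsq : √(TT g) ^ 2 = TT g := Real.sq_sqrt hT.le
      have hs0 : 0 ≤ √(TT g) := Real.sqrt_nonneg _
      have hd := det1 g
      unfold N at hN
      have hTT : TT g = g 1 0 ^ 2 + g 1 1 ^ 2 := rfl
      constructor
      · have h1 : 1 ≤ (g 0 0 ^ 2 + g 0 1 ^ 2) * (g 1 0 ^ 2 + g 1 1 ^ 2) := by
          nlinarith [sq_nonneg (g 0 0 * g 1 0 + g 0 1 * g 1 1)]
        have h2 : 1 ≤ R ^ 2 * TT g := by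
          rw [hTT] at *
          nlinarith [sq_nonneg (g 1 0), sq_nonneg (g 1 1)]
        have h3 : 1 ≤ (R * √(TT g)) ^ 2 := by rw [mul_pow, hsq]; exact h2
        have := (one_le_sq_iff_one_le_abs _).1 h3
        rwa [abs_of_nonneg (by positivity)] at this
      · have : √(TT g) ≤ R := by
          rw [Real.sqrt_le_left hR0.le, hTT]
          nlinarith [sq_nonneg (g 0 0), sq_nonneg (g 0 1)]
        change R * √(TT g) ≤ R ^ 2
        nlinarith
    · intro P hP t hts ht
      obtain ⟨ρ, hρ⟩ : ∃ ρ, ρ = P / R := ⟨_, rfl⟩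
      have hPR : P = R * ρ := by rw [hρ]; field_simp
      have hρ0 : 0 < ρ := by rw [hρ]; positivity
      have hr1 : ∀ g ∈ t, ρ ≤ √(TT g) := by
        intro g hg
        have := (ht g hg).1
        rw [hPR] at this
        exact le_of_mul_le_mul_left this hR0
      have hr2 : ∀ g ∈ t, √(TT g) ≤ 2 * ρ := by
        intro g hg
        have := (ht g hg).2
        rw [hPR] at this
        apply le_of_mul_le_mul_left _ hR0
        linarith
      have b1 : (t.card : ℝ) ≤ ((R / ρ - (-(R / ρ))) / (σ / (200 * ρ ^ 2)) + 1) *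
          (((1 / ρ ^ 2 - 0) / (σ / (200 * ρ ^ 2)) + 1) * (((Real.pi - (-Real.pi)) / (1 / 400) + 1) * 1)) := by
        apply pigeon t xx
        · positivity
        · have := Real.pi_pos
          have : 0 ≤ Real.pi - -Real.pi := by linarith
          have : 0 ≤ 1 / ρ ^ 2 - 0 := by simp; positivity
          positivity
        · have : 0 < R / ρ := by positivity
          linarith
        · intro g hg
          rw [← abs_le]
          have hT := TT_pos g
          have hsq : √(TT g) ^ 2 = TT g := Real.sq_sqrt hT.le
          have hN := (hs g (hts hg)).2
          have hxT : xx g * TT g = g 0 0 * g 1 0 + g 0 1 * g 1 1 := by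
            unfold xx; field_simp
          have hq : (xx g * TT g) ^ 2 ≤ R ^ 2 * TT g := by
            rw [hxT]
            have : (g 0 0 * g 1 0 + g 0 1 * g 1 1) ^ 2 ≤ (g 0 0 ^ 2 + g 0 1 ^ 2) * TT g := by
              unfold TT; nlinarith [sq_nonneg (g 0 0 * g 1 1 - g 0 1 * g 1 0)]
            refine this.trans ?_
            gcongr
            unfold N at hN
            nlinarith [sq_nonneg (g 1 0), sq_nonneg (g 1 1)]
          have hq2 : xx g ^ 2 * TT g ≤ R ^ 2 := by
            have : (xx g ^ 2 * TT g) * TT g ≤ R ^ 2 * TT g := by nlinarith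
            exact le_of_mul_le_mul_right this hT
          have hTρ : ρ ^ 2 ≤ TT g := by rw [← hsq]; have := hr1 g hg; gcongr
          have hq3 : (xx g * ρ) ^ 2 ≤ R ^ 2 := by
            nlinarith [sq_nonneg (xx g)]
          have := abs_le_of_sq_le_sq hq3 hR0.le
          rw [le_div_iff₀ hρ0]
          calc |xx g| * ρ = |xx g * ρ| := by rw [abs_mul, abs_of_pos hρ0]
            _ ≤ R := this
        · intro t1 ht1 hx1
          apply pigeon t1 yy
          · positivity
          · have := Real.pi_pos
            have : 0 ≤ Real.pi - -Real.pi := by linarith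
            positivity
          · positivity
          · intro g hg
            have hT := TT_pos g
            have hsq : √(TT g) ^ 2 = TT g := Real.sq_sqrt hT.le
            have hTρ : ρ ^ 2 ≤ TT g := by rw [← hsq]; have := hr1 g (ht1 hg); gcongr
            unfold yy
            exact ⟨by positivity, one_div_le_one_div_of_le (by positivity) hTρ⟩
          · intro t2 ht2 hx2
            apply pigeon t2 ph
            · norm_num
            · norm_num
            · linarith [Real.pi_pos]
            · intro g hg
              exact ⟨(Complex.neg_pi_lt_arg _).le, Complex.arg_le_pi _⟩
            · intro t3 ht3 hx3
              have : t3.card ≤ 1 := by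
                rw [Finset.card_le_one]
                intro g hg k hk
                have hg1 := ht1 (ht2 (ht3 hg))
                have hk1 := ht1 (ht2 (ht3 hk))
                exact A1 Γ σ hσ hσ1 hyp ell ρ hρ0 g k (hs g (hts hg1)).1 (hs k (hts hk1)).1
                  (hr1 g hg1) (hr2 g hg1) (hr1 k hk1) (hr2 k hk1)
                  (hx1 g (ht2 (ht3 hg)) k (ht2 (ht3 hk))) (hx2 g (ht3 hg) k (ht3 hk)) (hx3 g hg k hk)
              exact_mod_cast this
      have e1 : (R / ρ - (-(R / ρ))) / (σ / (200 * ρ ^ 2)) + 1 ≤ 401 * P / σ := by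
        have : (R / ρ - (-(R / ρ))) / (σ / (200 * ρ ^ 2)) = 400 * P / σ := by
          rw [hPR]; field_simp; ring
        rw [this]
        have : 1 ≤ P / σ := by rw [le_div_iff₀ hσ]; linarith
        have e : 401 * P / σ = 400 * P / σ + P / σ := by ring
        linarith
      have e2 : (1 / ρ ^ 2 - 0) / (σ / (200 * ρ ^ 2)) + 1 ≤ 201 / σ := by
        have : (1 / ρ ^ 2 - 0) / (σ / (200 * ρ ^ 2)) = 200 / σ := by
          field_simp; ring
        rw [this]
        have : 1 ≤ 1 / σ := by rw [le_div_iff₀ hσ]; linarith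
        have e : 201 / σ = 200 / σ + 1 / σ := by ring
        linarith
      have e3 : ((Real.pi - (-Real.pi)) / (1 / 400) + 1) * 1 ≤ 3201 := by
        have := Real.pi_le_four
        rw [div_div_eq_mul_div]; linarith
      calc (t.card : ℝ) ≤ _ := b1
        _ ≤ (401 * P / σ) * ((201 / σ) * 3201) := by
          have := Real.pi_pos
          have : 0 ≤ Real.pi - -Real.pi := by linarith
          have : 0 ≤ 1 / ρ ^ 2 - 0 := by simp; positivity
          gcongr
        _ = _ := by field_simp
  refine main.trans ?_
  rw [mul_div_assoc', div_mul_eq_mul_div]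
  gcongr
  norm_num
/-- `tr [u, v] - 2` for `u = c₀ + δ X` -/
noncomputable def Q (δ κ : ℝ) (v : SL2) : ℝ :=
  δ ^ 2 * (κ * (v 0 0 - v 1 1) ^ 2 + (v 1 0 + κ * v 0 1) ^ 2)

/-- the element `u = c₀ + δ X` lies in `Γ`. -/
structure HU (Γ : Subgroup SL2) (u : SL2) (δ κ : ℝ) : Prop where
  fin : FinB Γ
  mem : u ∈ Γ
  e1 : u 0 1 = δ
  e2 : u 1 0 = -(κ * δ)
  e3 : u 0 0 = u 1 1
  dpos : 0 < δ
  dlt : δ < 1 / 16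
  kpos : 0 ≤ κ
  kle : κ ≤ 1

noncomputable def s11 (κ : ℝ) (g : SL2) : ℝ := g 0 0 ^ 2 + κ * g 0 1 ^ 2
noncomputable def s12 (κ : ℝ) (g : SL2) : ℝ := g 0 0 * g 1 0 + κ * (g 0 1 * g 1 1)
noncomputable def s22 (κ : ℝ) (g : SL2) : ℝ := g 1 0 ^ 2 + κ * g 1 1 ^ 2

lemma sdet (κ : ℝ) (g : SL2) : s11 κ g * s22 κ g - s12 κ g ^ 2 = κ := by
  have := det1 g
  unfold s11 s12 s22
  linear_combination κ * (g 0 0 * g 1 1 - g 0 1 * g 1 0 + 1) * this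

lemma Q_eq (δ κ : ℝ) (g : SL2) : Q δ κ g = δ ^ 2 * (κ * s11 κ g + s22 κ g - 2 * κ) := by
  have := det1 g
  unfold Q s11 s22
  linear_combination (-2 * κ * δ ^ 2) * this

lemma Q_nonneg (δ κ : ℝ) (hκ : 0 ≤ κ) (g : SL2) : 0 ≤ Q δ κ g := by
  unfold Q; positivity

section J
variable {Γ : Subgroup SL2} {u : SL2} {δ κ : ℝ}

lemma conj_entries (H : HU Γ u δ κ) (v : SL2) :
    (v * u * v⁻¹) 0 0 = u 1 1 - δ * s12 κ v ∧ (v * u * v⁻¹) 0 1 = δ * s11 κ v ∧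
    (v * u * v⁻¹) 1 0 = - (δ * s22 κ v) ∧ (v * u * v⁻¹) 1 1 = u 1 1 + δ * s12 κ v := by
  have hd := det1 v
  refine ⟨?_, ?_, ?_, ?_⟩
  · rw [mul00, mul00, mul01, inv00, inv10, H.e1, H.e2, H.e3]; unfold s12
    linear_combination (u 1 1) * hd
  · rw [mul01, mul00, mul01, inv01, inv11, H.e1, H.e2, H.e3]; unfold s11
    ring
  · rw [mul10, mul10, mul11, inv00, inv10, H.e1, H.e2, H.e3]; unfold s22
    ring
  · rw [mul11, mul10, mul11, inv01, inv11, H.e1, H.e2, H.e3]; unfold s12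
    linear_combination (u 1 1) * hd

lemma udet (H : HU Γ u δ κ) : u 1 1 ^ 2 + κ * δ ^ 2 = 1 := by
  have := det1 u
  rw [H.e1, H.e2, H.e3] at this
  linarith

lemma Q_conj (H : HU Γ u δ κ) (v : SL2) :
    Q δ κ (v * u * v⁻¹) = Q δ κ v * (Q δ κ v + 4 * κ * δ ^ 2) := by
  obtain ⟨h0, h1, h2, h3⟩ := conj_entries H v
  have hd := sdet κ v
  rw [Q_eq δ κ v]
  unfold Q
  rw [h0, h1, h2, h3]
  linear_combination (-4 * κ * δ ^ 4) * hd

lemma N_conj_le (H : HU Γ u δ κ) (v : SL2) :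
    N (v * u * v⁻¹) ≤ 2 + δ ^ 2 * (s11 κ v + s22 κ v) ^ 2 := by
  obtain ⟨h0, h1, h2, h3⟩ := conj_entries H v
  have hd := sdet κ v
  have hu := udet H
  unfold N
  rw [h0, h1, h2, h3]
  have : 0 ≤ κ * δ ^ 2 := mul_nonneg H.kpos (sq_nonneg _)
  have e : 2 + δ ^ 2 * (s11 κ v + s22 κ v) ^ 2 - ((u 1 1 - δ * s12 κ v) ^ 2 + (δ * s11 κ v) ^ 2 + (-(δ * s22 κ v)) ^ 2 + (u 1 1 + δ * s12 κ v) ^ 2) = 4 * (κ * δ ^ 2) := by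
    linear_combination 2 * δ ^ 2 * hd - 2 * hu
  linarith

def seq (u v : SL2) : ℕ → SL2
  | 0 => v
  | n + 1 => seq u v n * u * (seq u v n)⁻¹

lemma seq_mem (H : HU Γ u δ κ) {v : SL2} (hv : v ∈ Γ) (n : ℕ) : seq u v n ∈ Γ := by
  induction n with
  | zero => exact hv
  | succ n ih => exact Γ.mul_mem (Γ.mul_mem ih H.mem) (Γ.inv_mem ih)

lemma small (H : HU Γ u δ κ) : 4 * κ * δ ^ 2 ≤ 1 / 4 := by
  have := H.dpos; have := H.dlt; have := H.kpos; have := H.kle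
  have h2 : δ ^ 2 ≤ (1 / 16) ^ 2 := by gcongr
  nlinarith

lemma seq_Q (H : HU Γ u δ κ) {v : SL2} (hQ : Q δ κ v < 1 / 4) (n : ℕ) : Q δ κ (seq u v n) < 1 / 4 := by
  induction n with
  | zero => exact hQ
  | succ n ih =>
    change Q δ κ (seq u v n * u * (seq u v n)⁻¹) < _
    rw [Q_conj H]
    have := Q_nonneg δ κ H.kpos (seq u v n)
    nlinarith [small H]

lemma seq_bdd (H : HU Γ u δ κ) {v : SL2} (hQ : Q δ κ v < 1 / 4) :
    ∃ K, ∀ n, N (seq u v (n + 1)) ≤ K := by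
  have hd := H.dpos
  rcases H.kpos.eq_or_lt with h0 | h0
  · have hc : ∀ n, |δ * seq u v n 1 0| ≤ 1 / 2 := by
      intro n
      have := seq_Q H hQ n
      unfold Q at this
      rw [← h0] at this
      apply abs_le_of_sq_le_sq _ (by norm_num)
      nlinarith
    have ha : ∀ n, |seq u v n 0 0| ≤ |v 0 0| + 2 := by
      intro n
      induction n with
      | zero => change |v 0 0| ≤ _; linarith
      | succ n ih =>
        change |(seq u v n * u * (seq u v n)⁻¹) 0 0| ≤ _
        rw [(conj_entries H _).1]
        have hu := udet H
        have hu1 : |u 1 1| ≤ 1 := by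
          apply abs_le_of_sq_le_sq _ (by norm_num)
          rw [← h0] at hu; linarith
        unfold s12
        rw [← h0]
        have e : u 1 1 - δ * (seq u v n 0 0 * seq u v n 1 0 + 0 * (seq u v n 0 1 * seq u v n 1 1)) = u 1 1 - (δ * seq u v n 1 0) * seq u v n 0 0 := by ring
        rw [e]
        refine (abs_sub _ _).trans ?_
        rw [abs_mul]
        have : |δ * seq u v n 1 0| * |seq u v n 0 0| ≤ (1 / 2) * (|v 0 0| + 2) := by
          gcongr
          exact hc n
        have := abs_nonneg (v 0 0)
        linarith
    refine ⟨2 + δ ^ 2 * ((|v 0 0| + 2) ^ 2 + (1 / (2 * δ)) ^ 2) ^ 2, fun n => ?_⟩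
    refine (N_conj_le H _).trans ?_
    unfold s11 s22
    rw [← h0]
    have h1 : (seq u v n 0 0) ^ 2 ≤ (|v 0 0| + 2) ^ 2 := by
      rw [← sq_abs]; gcongr; exact ha n
    have h2 : (seq u v n 1 0) ^ 2 ≤ (1 / (2 * δ)) ^ 2 := by
      rw [← sq_abs]; gcongr
      have := hc n
      rw [abs_mul, abs_of_pos hd] at this
      rw [le_div_iff₀ (by positivity)]
      linarith
    rw [zero_mul, zero_mul, add_zero, add_zero]
    gcongr
  · refine ⟨2 + δ ^ 2 * ((1 / δ ^ 2 + 2) / κ + (1 / δ ^ 2 + 2)) ^ 2, fun n => ?_⟩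
    refine (N_conj_le H _).trans ?_
    have hq := seq_Q H hQ n
    rw [Q_eq] at hq
    have hk := H.kpos
    have hk1 := H.kle
    have p1 : 0 ≤ s11 κ (seq u v n) := by unfold s11; positivity
    have p2 : 0 ≤ s22 κ (seq u v n) := by unfold s22; positivity
    have hD : κ * s11 κ (seq u v n) + s22 κ (seq u v n) ≤ 1 / δ ^ 2 + 2 := by
      have : κ * s11 κ (seq u v n) + s22 κ (seq u v n) - 2 * κ ≤ 1 / δ ^ 2 := by
        rw [le_div_iff₀ (by positivity)]; linarith
      linarith
    gcongr
    · rw [le_div_iff₀ h0]; linarith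
    · have := mul_nonneg hk p1
      linarith

lemma Jlem (H : HU Γ u δ κ) {v : SL2} (hv : v ∈ Γ) (hQ : Q δ κ v < 1 / 4) : Q δ κ v = 0 := by
  by_contra hne
  obtain ⟨K, hK⟩ := seq_bdd H hQ
  have hpos : ∀ n, 0 < Q δ κ (seq u v n) := by
    intro n
    induction n with
    | zero => exact lt_of_le_of_ne (Q_nonneg δ κ H.kpos v) (Ne.symm hne)
    | succ n ih =>
      change 0 < Q δ κ (seq u v n * u * (seq u v n)⁻¹)
      rw [Q_conj H]
      have : 0 ≤ 4 * κ * δ ^ 2 := by have := H.kpos; positivity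
      positivity
  have hanti : StrictAnti (fun n => Q δ κ (seq u v n)) := by
    apply strictAnti_nat_of_succ_lt
    intro n
    change Q δ κ (seq u v n * u * (seq u v n)⁻¹) < _
    rw [Q_conj H]
    have h1 := hpos n
    have h2 := seq_Q H hQ n
    have h3 := small H
    nlinarith
  have hinj : Function.Injective (fun n => seq u v (n + 1)) := by
    intro a b hab
    have : Q δ κ (seq u v (a + 1)) = Q δ κ (seq u v (b + 1)) := by
      have := congrArg (Q δ κ) hab
      exact this
    have := hanti.injective this
    omega
  apply Set.infinite_range_of_injective hinj
  apply (H.fin K).subset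
  rintro _ ⟨n, rfl⟩
  exact ⟨seq_mem H hv _, hK n⟩

lemma parab_aux (H : HU Γ u δ 0) {v : SL2} (hv : v ∈ Γ) (hc : v 1 0 = 0)
    (ha : (v 0 0) ^ 2 < 1) : False := by
  have hd := det1 v
  rw [hc] at hd
  have ha0 : v 0 0 ≠ 0 := by
    intro h; rw [h] at hd; norm_num at hd
  let w : ℕ → SL2 := fun n => Nat.rec u (fun _ x => v * x * v⁻¹) n
  have hw : ∀ n, w (n + 1) = v * w n * v⁻¹ := fun n => rfl
  have hmem : ∀ n, w n ∈ Γ := by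
    intro n
    induction n with
    | zero => exact H.mem
    | succ n ih => rw [hw]; exact Γ.mul_mem (Γ.mul_mem hv ih) (Γ.inv_mem hv)
  have hent : ∀ n, w n 0 0 = u 1 1 ∧ w n 0 1 = δ * ((v 0 0) ^ 2) ^ n ∧ w n 1 0 = 0 ∧ w n 1 1 = u 1 1 := by
    intro n
    induction n with
    | zero =>
      change u 0 0 = _ ∧ u 0 1 = _ ∧ u 1 0 = _ ∧ _
      rw [H.e1, H.e2, H.e3]; simp; rfl
    | succ n ih =>
      obtain ⟨i0, i1, i2, i3⟩ := ih
      rw [hw]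
      refine ⟨?_, ?_, ?_, ?_⟩
      · rw [mul00, mul00, mul01, inv00, inv10, i0, i1, i2, i3, hc]
        linear_combination (u 1 1) * hd
      · rw [mul01, mul00, mul01, inv01, inv11, i0, i1, i2, i3]
        ring
      · rw [mul10, mul10, mul11, inv00, inv10, i0, i1, i2, i3, hc]; ring
      · rw [mul11, mul10, mul11, inv01, inv11, i0, i1, i2, i3, hc]
        linear_combination (u 1 1) * hd
  have hu := udet H
  have hdp := H.dpos
  have hinj : Function.Injective w := by
    intro a b hab
    have h1 := (hent a).2.1
    rw [hab, (hent b).2.1] at h1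
    have h2 := mul_left_cancel₀ hdp.ne' h1
    exact (pow_right_injective₀ (by positivity) ha.ne h2).symm
  apply Set.infinite_range_of_injective hinj
  apply (H.fin (2 + δ ^ 2)).subset
  rintro _ ⟨n, rfl⟩
  refine ⟨hmem n, ?_⟩
  unfold N
  obtain ⟨i0, i1, i2, i3⟩ := hent n
  rw [i0, i1, i2, i3, mul_pow]
  have h1 : (((v 0 0) ^ 2) ^ n) ^ 2 ≤ 1 := pow_le_one₀ (by positivity) (pow_le_one₀ (by positivity) ha.le)
  have h2 : δ ^ 2 * (((v 0 0) ^ 2) ^ n) ^ 2 ≤ δ ^ 2 * 1 := by gcongr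
  linarith

lemma Jf (H : HU Γ u δ κ) {v : SL2} (hv : v ∈ Γ) (hQ : Q δ κ v < 1 / 4) :
    v 0 0 = v 1 1 ∧ v 1 0 = -(κ * v 0 1) := by
  have h := Jlem H hv hQ
  have hd := H.dpos
  have hk := H.kpos
  unfold Q at h
  have h1 := (mul_eq_zero.1 h).resolve_left (by positivity)
  have h2 : κ * (v 0 0 - v 1 1) ^ 2 = 0 := by
    have := mul_nonneg hk (sq_nonneg (v 0 0 - v 1 1))
    nlinarith [sq_nonneg (v 1 0 + κ * v 0 1)]
  have h3 : v 1 0 + κ * v 0 1 = 0 := by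
    rw [h2, zero_add] at h1
    exact pow_eq_zero_iff (by norm_num) |>.1 h1
  refine ⟨?_, by linarith⟩
  rcases hk.eq_or_lt with h0 | h0
  · subst h0
    have hc : v 1 0 = 0 := by linarith
    have hdet := det1 v
    rw [hc] at hdet
    by_contra hne
    rcases lt_trichotomy ((v 0 0) ^ 2) 1 with hlt | heq | hgt
    · exact parab_aux H hv hc hlt
    · apply hne
      have : v 0 0 ≠ 0 := by intro h; rw [h] at heq; norm_num at heq
      apply mul_left_cancel₀ this
      linarith
    · apply parab_aux H (Γ.inv_mem hv)
      · rw [inv10, hc]; simp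
      · rw [inv00]
        have e : (v 0 0) ^ 2 * (v 1 1) ^ 2 = 1 := by
          linear_combination (v 0 0 * v 1 1 + 1) * hdet
        by_contra hc2
        push Not at hc2
        nlinarith
  · have := (mul_eq_zero.1 h2).resolve_left h0.ne'
    have := pow_eq_zero_iff (by norm_num) |>.1 this
    linarith

lemma not_hyp {v : SL2} (hκ : 0 ≤ κ) (h1 : v 0 0 = v 1 1) (h2 : v 1 0 = -(κ * v 0 1)) : |tr v| ≤ 2 := by
  have hd := det1 v
  rw [h1, h2] at hd
  unfold tr
  rw [h1]
  apply abs_le_of_sq_le_sq _ (by norm_num)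
  nlinarith [mul_nonneg hκ (sq_nonneg (v 0 1))]
end J
lemma arc (c t c' t' k : ℝ) (hk : 0 ≤ k) (h : c ^ 2 + k * t ^ 2 = 1) (h' : c' ^ 2 + k * t' ^ 2 = 1)
    (hc : 1 / 2 ≤ c ^ 2) (hc' : 1 / 2 ≤ c' ^ 2) (hcc : 0 < c * c') :
    |c * t' - t * c'| ≤ 2 * |t - t'| := by
  have e1 : c * t' - t * c' = c * (t' - t) + t * (c - c') := by ring
  have hc1 : |c| ≤ 1 := by
    apply abs_le_of_sq_le_sq _ (by norm_num)
    nlinarith [mul_nonneg hk (sq_nonneg t)]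
  have e2 : t * (c - c') * (c + c') = (k * (t * (t + t'))) * (t' - t) := by
    linear_combination t * h - t * h'
  have h3 : 1 ≤ |c + c'| := by
    rw [← one_le_sq_iff_one_le_abs]; nlinarith
  have h4 : |k * (t * (t + t'))| ≤ 1 := by
    rw [abs_le]; constructor <;>
    nlinarith [mul_nonneg hk (sq_nonneg (t - t')), mul_nonneg hk (sq_nonneg (t + t')), mul_nonneg hk (sq_nonneg t), mul_nonneg hk (sq_nonneg t')]
  have h5 : |t * (c - c')| ≤ |t - t'| := by
    have : |t * (c - c')| * |c + c'| = |k * (t * (t + t'))| * |t' - t| := by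
      rw [← abs_mul, ← abs_mul, e2]
    rw [abs_sub_comm t' t] at this
    have a1 := abs_nonneg (t * (c - c'))
    have a2 := abs_nonneg (t - t')
    nlinarith
  rw [e1]
  refine (abs_add_le _ _).trans ?_
  rw [abs_mul, abs_sub_comm t' t]
  have a2 := abs_nonneg (t - t')
  nlinarith

section B
variable {Γ : Subgroup SL2} {u : SL2} {δ κ : ℝ}

/-- membership in the centralizer -/
def InA (κ : ℝ) (a : SL2) : Prop := a 0 0 = a 1 1 ∧ a 1 0 = -(κ * a 0 1)

lemma InA_det {a : SL2} (h : InA κ a) : a 0 0 ^ 2 + κ * a 0 1 ^ 2 = 1 := by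
  have := det1 a
  rw [h.2, ← h.1] at this
  linarith

/-- two elements of the centralizer that are close agree up to sign -/
lemma A_eq (hmin : ∀ a ∈ Γ, InA κ a → a 0 1 ≠ 0 → δ ≤ |a 0 1|)
    {a b : SL2} (ha : a ∈ Γ) (hb : b ∈ Γ) (hA : InA κ a) (hB : InA κ b)
    (hlt : |a 0 0 * b 0 1 - a 0 1 * b 0 0| < δ) :
    a = b ∨ (b 0 0 = - a 0 0 ∧ b 0 1 = - a 0 1) := by
  have hm : a⁻¹ * b ∈ Γ := Γ.mul_mem (Γ.inv_mem ha) hb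
  have e01 : (a⁻¹ * b) 0 1 = a 0 0 * b 0 1 - a 0 1 * b 0 0 := by
    rw [mul01, inv00, inv01, ← hA.1, ← hB.1]; ring
  have e00 : (a⁻¹ * b) 0 0 = a 0 0 * b 0 0 + κ * (a 0 1 * b 0 1) := by
    rw [mul00, inv00, inv01, ← hA.1, hB.2]; ring
  have hI : InA κ (a⁻¹ * b) := by
    constructor
    · rw [e00, mul11, inv10, inv11, hA.2, ← hB.1]; ring
    · rw [e01, mul10, inv10, inv11, hA.2, hB.2]; ring
  have hz : (a⁻¹ * b) 0 1 = 0 := by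
    by_contra hne
    have := hmin _ hm hI hne
    rw [e01] at this
    linarith
  have hdet := InA_det hI
  have hda := InA_det hA
  rw [hz] at hdet
  have h2 : ((a⁻¹ * b) 0 0 - 1) * ((a⁻¹ * b) 0 0 + 1) = 0 := by linear_combination hdet
  rw [e01] at hz
  rcases mul_eq_zero.1 h2 with h | h
  · left
    have h1 : a 0 0 * b 0 0 + κ * (a 0 1 * b 0 1) = 1 := by rw [← e00]; linarith
    have f0 : b 0 0 = a 0 0 := by linear_combination (a 0 0) * h1 - b 0 0 * hda - κ * a 0 1 * hz
    have f1 : b 0 1 = a 0 1 := by linear_combination (a 0 1) * h1 - b 0 1 * hda + a 0 0 * hz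
    apply ext4
    · exact f0.symm
    · exact f1.symm
    · rw [hA.2, hB.2, f1]
    · rw [← hA.1, ← hB.1, f0]
  · right
    have h1 : a 0 0 * b 0 0 + κ * (a 0 1 * b 0 1) = -1 := by rw [← e00]; linarith
    constructor
    · linear_combination (a 0 0) * h1 - b 0 0 * hda - κ * a 0 1 * hz
    · linear_combination (a 0 1) * h1 - b 0 1 * hda + a 0 0 * hz

lemma count1 (hκ : 0 ≤ κ) (hδ : 0 < δ) (hmin : ∀ a ∈ Γ, InA κ a → a 0 1 ≠ 0 → δ ≤ |a 0 1|)
    (τ : ℝ) (hτ : δ ≤ τ) (t : Finset SL2) (ht : ∀ a ∈ t, a ∈ Γ ∧ InA κ a ∧ |a 0 1| ≤ τ)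
    (h1 : ∀ a ∈ t, 1 / 2 ≤ a 0 0 ^ 2) (h2 : ∀ a ∈ t, ∀ b ∈ t, 0 < a 0 0 * b 0 0) :
    (t.card : ℝ) ≤ 7 * (τ / δ) := by
  have b := pigeon t (fun a => a 0 1) (-τ) τ (δ / 2) 1 (by positivity) (by norm_num) (by linarith)
    (fun a ha => abs_le.1 (ht a ha).2.2) (by
      intro t' ht' hc
      have : t'.card ≤ 1 := by
        rw [Finset.card_le_one]
        intro a ha b hb
        have ha1 := ht a (ht' ha)
        have hb1 := ht b (ht' hb)
        have := arc (a 0 0) (a 0 1) (b 0 0) (b 0 1) κ hκ (InA_det ha1.2.1) (InA_det hb1.2.1)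
          (h1 a (ht' ha)) (h1 b (ht' hb)) (h2 a (ht' ha) b (ht' hb))
        have h3 := hc a ha b hb
        rcases A_eq hmin ha1.1 hb1.1 ha1.2.1 hb1.2.1 (by linarith) with h | h
        · exact h
        · exfalso
          have := h2 a (ht' ha) b (ht' hb)
          rw [h.1] at this
          nlinarith [sq_nonneg (a 0 0), sq_nonneg (b 0 0)]
      exact_mod_cast this)
  have e : (τ - -τ) / (δ / 2) = 4 * (τ / δ) := by field_simp; ring
  have : 1 ≤ τ / δ := by rw [le_div_iff₀ hδ]; linarith
  rw [e] at b
  linarith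

lemma count2 (hδ : 0 < δ) (hmin : ∀ a ∈ Γ, InA κ a → a 0 1 ≠ 0 → δ ≤ |a 0 1|)
    (τ : ℝ) (hτ : δ ≤ τ) (t : Finset SL2) (ht : ∀ a ∈ t, a ∈ Γ ∧ InA κ a ∧ |a 0 1| ≤ τ)
    (h1 : ∀ a ∈ t, 1 / 2 ≤ κ * a 0 1 ^ 2) (h2 : ∀ a ∈ t, ∀ b ∈ t, 0 < a 0 1 * b 0 1) :
    (t.card : ℝ) ≤ 7 * (τ / δ) := by
  have hτδ : 1 ≤ τ / δ := by rw [le_div_iff₀ hδ]; linarith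
  rcases t.eq_empty_or_nonempty with h0 | ⟨a0, ha0⟩
  · rw [h0]; simp; positivity
  have hκ : 0 < κ := by
    have := h1 a0 ha0
    by_contra hc
    push Not at hc
    nlinarith [sq_nonneg (a0 0 1)]
  have hτ0 : 0 < τ := by linarith
  have hsk : 0 < √κ := Real.sqrt_pos.2 hκ
  have hsk2 : √κ ^ 2 = κ := Real.sq_sqrt hκ.le
  have b := pigeon t (fun a => a 0 0) (-1) 1 (δ * √κ / 2) 1 (by positivity) (by norm_num) (by linarith)
    (fun a ha => by
      have := InA_det (ht a ha).2.1
      rw [← abs_le]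
      apply abs_le_of_sq_le_sq _ (by norm_num)
      nlinarith [mul_nonneg hκ.le (sq_nonneg (a 0 1))]) (by
      intro t' ht' hc
      have : t'.card ≤ 1 := by
        rw [Finset.card_le_one]
        intro a ha b hb
        have ha1 := ht a (ht' ha)
        have hb1 := ht b (ht' hb)
        have d1 := InA_det ha1.2.1
        have d2 := InA_det hb1.2.1
        have := arc (√κ * a 0 1) (a 0 0) (√κ * b 0 1) (b 0 0) 1 (by norm_num)
          (by rw [mul_pow, hsk2]; linarith) (by rw [mul_pow, hsk2]; linarith)
          (by rw [mul_pow, hsk2]; exact h1 a (ht' ha)) (by rw [mul_pow, hsk2]; exact h1 b (ht' hb))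
          (by
            have := mul_pos hκ (h2 a (ht' ha) b (ht' hb))
            rw [← hsk2] at this
            linarith)
        have h3 := hc a ha b hb
        have e : √κ * a 0 1 * b 0 0 - a 0 0 * (√κ * b 0 1) = -(√κ * (a 0 0 * b 0 1 - a 0 1 * b 0 0)) := by ring
        rw [e, abs_neg, abs_mul, abs_of_pos hsk] at this
        rcases A_eq hmin ha1.1 hb1.1 ha1.2.1 hb1.2.1 (by
          apply lt_of_mul_lt_mul_left _ hsk.le
          linarith) with h | h
        · exact h
        · exfalso
          have := h2 a (ht' ha) b (ht' hb)
          rw [h.2] at this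
          nlinarith [sq_nonneg (a 0 1), sq_nonneg (b 0 1)]
      exact_mod_cast this)
  have e : (1 - -1) / (δ * √κ / 2) = 4 * (1 / √κ) / δ := by field_simp; ring
  have h3 : 1 / √κ ≤ 3 / 2 * τ := by
    rw [div_le_iff₀ hsk]
    have h4 := h1 a0 ha0
    have h5 : (a0 0 1) ^ 2 ≤ τ ^ 2 := by rw [← sq_abs]; gcongr; exact (ht a0 ha0).2.2
    have h6 : 1 ≤ (3 / 2 * τ * √κ) ^ 2 := by
      rw [mul_pow, hsk2]; nlinarith
    have := (one_le_sq_iff_one_le_abs _).1 h6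
    rwa [abs_of_nonneg (by positivity)] at this
  have h7 : 4 * (1 / √κ) / δ ≤ 4 * (3 / 2 * τ) / δ := by gcongr
  have e2 : 4 * (3 / 2 * τ) / δ = 6 * (τ / δ) := by ring
  rw [e] at b
  linarith

lemma countA (hκ : 0 ≤ κ) (hδ : 0 < δ) (hmin : ∀ a ∈ Γ, InA κ a → a 0 1 ≠ 0 → δ ≤ |a 0 1|)
    (τ : ℝ) (hτ : δ ≤ τ) (t : Finset SL2) (ht : ∀ a ∈ t, a ∈ Γ ∧ InA κ a ∧ |a 0 1| ≤ τ) :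
    (t.card : ℝ) ≤ 28 * (τ / δ) := by
  classical
  have c0 := Finset.card_filter_add_card_filter_not (s := t) (fun a => 1 / 2 ≤ a 0 0 ^ 2)
  have c1 := Finset.card_filter_add_card_filter_not (s := t.filter (fun a => 1 / 2 ≤ a 0 0 ^ 2)) (fun a => 0 < a 0 0)
  have c2 := Finset.card_filter_add_card_filter_not (s := t.filter (fun a => ¬ (1 / 2 ≤ a 0 0 ^ 2))) (fun a => 0 < a 0 1)
  have q1 := count1 hκ hδ hmin τ hτ ((t.filter (fun a => 1 / 2 ≤ a 0 0 ^ 2)).filter (fun a => 0 < a 0 0))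
    (by intro a ha; simp only [Finset.mem_filter] at ha; exact ht a ha.1.1)
    (by intro a ha; simp only [Finset.mem_filter] at ha; exact ha.1.2)
    (by intro a ha b hb; simp only [Finset.mem_filter] at ha hb; exact mul_pos ha.2 hb.2)
  have q2 := count1 hκ hδ hmin τ hτ ((t.filter (fun a => 1 / 2 ≤ a 0 0 ^ 2)).filter (fun a => ¬ 0 < a 0 0))
    (by intro a ha; simp only [Finset.mem_filter] at ha; exact ht a ha.1.1)
    (by intro a ha; simp only [Finset.mem_filter] at ha; exact ha.1.2)
    (by
      intro a ha b hb; simp only [Finset.mem_filter] at ha hb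
      have f : ∀ x : ℝ, 1 / 2 ≤ x ^ 2 → ¬ 0 < x → x < 0 := by
        intro x h1 h2
        push Not at h2
        apply lt_of_le_of_ne h2
        rintro rfl
        norm_num at h1
      exact mul_pos_of_neg_of_neg (f _ ha.1.2 ha.2) (f _ hb.1.2 hb.2))
  have f2 : ∀ a ∈ t, ¬ (1 / 2 ≤ a 0 0 ^ 2) → 1 / 2 ≤ κ * a 0 1 ^ 2 := by
    intro a ha h
    have := InA_det (ht a ha).2.1
    linarith
  have q3 := count2 hδ hmin τ hτ ((t.filter (fun a => ¬ (1 / 2 ≤ a 0 0 ^ 2))).filter (fun a => 0 < a 0 1))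
    (by intro a ha; simp only [Finset.mem_filter] at ha; exact ht a ha.1.1)
    (by intro a ha; simp only [Finset.mem_filter] at ha; exact f2 a ha.1.1 ha.1.2)
    (by intro a ha b hb; simp only [Finset.mem_filter] at ha hb; exact mul_pos ha.2 hb.2)
  have q4 := count2 hδ hmin τ hτ ((t.filter (fun a => ¬ (1 / 2 ≤ a 0 0 ^ 2))).filter (fun a => ¬ 0 < a 0 1))
    (by intro a ha; simp only [Finset.mem_filter] at ha; exact ht a ha.1.1)
    (by intro a ha; simp only [Finset.mem_filter] at ha; exact f2 a ha.1.1 ha.1.2)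
    (by
      intro a ha b hb; simp only [Finset.mem_filter] at ha hb
      have f : ∀ x : ℝ, 1 / 2 ≤ κ * x ^ 2 → ¬ 0 < x → x < 0 := by
        intro x h1 h2
        push Not at h2
        apply lt_of_le_of_ne h2
        rintro rfl
        norm_num at h1
      exact mul_pos_of_neg_of_neg (f _ (f2 _ ha.1.1 ha.1.2) ha.2) (f _ (f2 _ hb.1.1 hb.1.2) hb.2))
  rw [← c0, ← c1, ← c2]
  push_cast
  linarith

noncomputable def TS (κ : ℝ) (g : SL2) : ℝ := s11 κ g + s22 κ g
noncomputable def al (κ : ℝ) (g : SL2) : ℝ := Complex.arg ⟨(s11 κ g - s22 κ g) / 2, s12 κ g⟩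
noncomputable def pn (κ : ℝ) (g : SL2) : ℝ := ‖(⟨(s11 κ g - s22 κ g) / 2, s12 κ g⟩ : ℂ)‖

lemma pn_sq (κ : ℝ) (g : SL2) : pn κ g ^ 2 = TS κ g ^ 2 / 4 - κ := by
  unfold pn TS
  rw [Complex.sq_norm, Complex.normSq_mk]
  linear_combination (-1) * sdet κ g

lemma Q_inv_mul (δ κ : ℝ) (g k : SL2) : Q δ κ (g⁻¹ * k) = δ ^ 2 *
    (TS κ g * TS κ k / 2 - 2 * pn κ g * pn κ k * Real.cos (al κ g - al κ k) - 2 * κ) := by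
  have c1 : pn κ g * Real.cos (al κ g) = (s11 κ g - s22 κ g) / 2 := Complex.norm_mul_cos_arg _
  have c2 : pn κ k * Real.cos (al κ k) = (s11 κ k - s22 κ k) / 2 := Complex.norm_mul_cos_arg _
  have d1 : pn κ g * Real.sin (al κ g) = s12 κ g := Complex.norm_mul_sin_arg _
  have d2 : pn κ k * Real.sin (al κ k) = s12 κ k := Complex.norm_mul_sin_arg _
  have e : 2 * pn κ g * pn κ k * Real.cos (al κ g - al κ k) =
      2 * ((s11 κ g - s22 κ g) / 2) * ((s11 κ k - s22 κ k) / 2) + 2 * s12 κ g * s12 κ k := by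
    rw [Real.cos_sub, ← c1, ← c2, ← d1, ← d2]; ring
  rw [e, Q_eq]
  have h1 := det1 g
  have h2 := det1 k
  unfold TS
  have f : κ * s11 κ (g⁻¹ * k) + s22 κ (g⁻¹ * k) = s11 κ g * s22 κ k + s22 κ g * s11 κ k - 2 * s12 κ g * s12 κ k := by
    unfold s11 s12 s22
    rw [mul00, mul01, mul10, mul11, inv00, inv01, inv10, inv11]
    ring
  rw [f]
  ring

lemma TS_nonneg (hκ : 0 ≤ κ) (g : SL2) : 0 ≤ TS κ g := by
  unfold TS s11 s22; positivity

lemma close_Q (hδ : 0 < δ) (hδ1 : δ < 1 / 16) (hκ : 0 ≤ κ) (hκ1 : κ ≤ 1) (ρ : ℝ) (hρ : 0 < ρ) (g k : SL2)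
    (g1 : ρ ^ 2 ≤ TS κ g) (g2 : TS κ g ≤ 4 * ρ ^ 2) (k1 : ρ ^ 2 ≤ TS κ k) (k2 : TS κ k ≤ 4 * ρ ^ 2)
    (hal : |al κ g - al κ k| < 1 / (8 * δ * ρ ^ 2)) : Q δ κ (g⁻¹ * k) < 1 / 4 := by
  rw [Q_inv_mul]
  have hpg := pn_sq κ g
  have hpk := pn_sq κ k
  have pg0 : 0 ≤ pn κ g := norm_nonneg _
  have pk0 : 0 ≤ pn κ k := norm_nonneg _
  have hcos := Real.one_sub_sq_div_two_le_cos (x := al κ g - al κ k)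
  have hΔ : (al κ g - al κ k) ^ 2 ≤ (1 / (8 * δ * ρ ^ 2)) ^ 2 := by
    rw [← sq_abs]; gcongr
  generalize al κ g - al κ k = Δ at *
  generalize pn κ g = p at *
  generalize pn κ k = p' at *
  generalize TS κ g = T at *
  generalize TS κ k = T' at *
  have hρ2 : 0 < ρ ^ 2 := by positivity
  generalize hX : ρ ^ 2 = X at *
  have hT : 0 < T := by linarith
  have hT' : 0 < T' := by linarith
  have hpT : p ≤ T / 2 := by
    apply le_of_sq_le_sq _ (by positivity)
    rw [hpg]; linarith
  have hpT' : p' ≤ T' / 2 := by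
    apply le_of_sq_le_sq _ (by positivity)
    rw [hpk]; linarith
  have a1 : (T / 2 - p) * T ≤ 2 * κ := by
    have : (T / 2 - p) * (T / 2 + p) = κ := by linear_combination (-1) * hpg
    have := mul_nonneg (sub_nonneg.2 hpT) pg0
    linarith
  have a2 : (T' / 2 - p') * T' ≤ 2 * κ := by
    have : (T' / 2 - p') * (T' / 2 + p') = κ := by linear_combination (-1) * hpk
    have := mul_nonneg (sub_nonneg.2 hpT') pk0
    linarith
  have b1 : (T / 2 - p) * (T' / 2) ≤ 4 * κ := by
    have : (T / 2 - p) * (T' / 2) ≤ (T / 2 - p) * (2 * T) :=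
      mul_le_mul_of_nonneg_left (by linarith) (sub_nonneg.2 hpT)
    linarith
  have b2 : p * (T' / 2 - p') ≤ 4 * κ := by
    have : p * (T' / 2 - p') ≤ (2 * T') * (T' / 2 - p') :=
      mul_le_mul_of_nonneg_right (by linarith) (sub_nonneg.2 hpT')
    linarith
  have hpp : p * p' ≤ 4 * X ^ 2 := by
    have := mul_le_mul (hpT.trans (by linarith : T / 2 ≤ 2 * X)) (hpT'.trans (by linarith : T' / 2 ≤ 2 * X)) pk0 (by positivity)
    linarith
  have hpp0 : 0 ≤ p * p' := mul_nonneg pg0 pk0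
  have c1 : p * p' * (1 - Δ ^ 2 / 2) ≤ p * p' * Real.cos Δ := mul_le_mul_of_nonneg_left hcos hpp0
  have c2 : p * p' * Δ ^ 2 ≤ 4 * X ^ 2 * (1 / (8 * δ * X)) ^ 2 := by gcongr
  have c3 : 4 * X ^ 2 * (1 / (8 * δ * X)) ^ 2 = 1 / (16 * δ ^ 2) := by field_simp; norm_num
  have d1 : T * T' / 2 - 2 * p * p' * Real.cos Δ - 2 * κ ≤ 16 * 1 + 1 / (16 * δ ^ 2) := by
    linarith
  calc _ ≤ δ ^ 2 * (16 * 1 + 1 / (16 * δ ^ 2)) := by gcongr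
    _ = 16 * δ ^ 2 + 1 / 16 := by field_simp
    _ < 1 / 4 := by nlinarith

lemma fiber (H : HU Γ u δ κ) (hmin : ∀ a ∈ Γ, InA κ a → a 0 1 ≠ 0 → δ ≤ |a 0 1|)
    (R : ℝ) (ρ : ℝ) (hρ : 0 < ρ) (hρR : ρ ≤ R) (t : Finset SL2) (hs : ∀ g ∈ t, g ∈ Γ ∧ N g ≤ R ^ 2)
    (h1 : ∀ g ∈ t, ρ ^ 2 ≤ TS κ g)
    (hQ : ∀ g ∈ t, ∀ k ∈ t, Q δ κ (g⁻¹ * k) < 1 / 4) : (t.card : ℝ) ≤ 112 * (R / (ρ * δ)) := by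
  classical
  have hδ := H.dpos
  have hκ := H.kpos
  have hR : 0 < R := by linarith
  rcases t.eq_empty_or_nonempty with h0 | ⟨g, hg⟩
  · rw [h0]; simp; positivity
  have hτ : δ ≤ 4 * R / ρ := by
    rw [le_div_iff₀ hρ]
    have := H.dlt
    nlinarith
  have hc := countA hκ hδ hmin (4 * R / ρ) hτ (t.image (fun k => g⁻¹ * k)) (by
    intro a ha
    rw [Finset.mem_image] at ha
    obtain ⟨k, hk, rfl⟩ := ha
    have hm : g⁻¹ * k ∈ Γ := Γ.mul_mem (Γ.inv_mem (hs g hg).1) (hs k hk).1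
    have hA : InA κ (g⁻¹ * k) := Jf H hm (hQ g hg k hk)
    refine ⟨hm, hA, ?_⟩
    have hk' : k = g * (g⁻¹ * k) := by group
    have hNg := (hs g hg).2
    have hNk := (hs k hk).2
    have hdt := InA_det hA
    have hT := h1 g hg
    have k01 : k 0 1 = g 0 0 * (g⁻¹ * k) 0 1 + g 0 1 * (g⁻¹ * k) 0 0 := by
      conv_lhs => rw [hk']
      rw [mul01, ← hA.1]
    have k11 : k 1 1 = g 1 0 * (g⁻¹ * k) 0 1 + g 1 1 * (g⁻¹ * k) 0 0 := by
      conv_lhs => rw [hk']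
      rw [mul11, ← hA.1]
    unfold N at hNg hNk
    unfold TS s11 s22 at hT
    generalize (g⁻¹ * k) 0 1 = τ at *
    generalize (g⁻¹ * k) 0 0 = c at *
    generalize g 0 0 = a at *
    generalize g 0 1 = b at *
    generalize g 1 0 = a' at *
    generalize g 1 1 = b' at *
    have e1 : b ^ 2 + b' ^ 2 ≤ R ^ 2 := by linarith [sq_nonneg a, sq_nonneg a']
    have e2 : (k 0 1) ^ 2 + (k 1 1) ^ 2 ≤ R ^ 2 := by linarith [sq_nonneg (k 0 0), sq_nonneg (k 1 0)]
    rw [k01, k11] at e2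
    have hc2 : c ^ 2 ≤ 1 := by linarith [mul_nonneg hκ (sq_nonneg τ)]
    have key : τ ^ 2 * ρ ^ 2 ≤ 16 * R ^ 2 := by
      rcases le_total (κ * R ^ 2) (3 / 4 * ρ ^ 2) with h | h
      · have h3 : κ * (b ^ 2 + b' ^ 2) ≤ κ * R ^ 2 := mul_le_mul_of_nonneg_left e1 hκ
        have h4 : ρ ^ 2 / 4 ≤ a ^ 2 + a' ^ 2 := by linarith
        have h5 : τ ^ 2 * (a ^ 2 + a' ^ 2) ≤ 4 * R ^ 2 := by
          have h6 : c ^ 2 * (b ^ 2 + b' ^ 2) ≤ 1 * R ^ 2 := by gcongr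
          have h7 : τ ^ 2 * (a ^ 2 + a' ^ 2) ≤ 2 * ((a * τ + b * c) ^ 2 + (a' * τ + b' * c) ^ 2) + 2 * (c ^ 2 * (b ^ 2 + b' ^ 2)) := by
            linarith [sq_nonneg (a * τ + 2 * (b * c)), sq_nonneg (a' * τ + 2 * (b' * c))]
          linarith
        have h8 : τ ^ 2 * (ρ ^ 2 / 4) ≤ τ ^ 2 * (a ^ 2 + a' ^ 2) := by gcongr
        linarith
      · have h3 : κ * τ ^ 2 ≤ 1 := by linarith [sq_nonneg c]
        have h4 : τ ^ 2 * (3 / 4 * ρ ^ 2) ≤ τ ^ 2 * (κ * R ^ 2) := by gcongr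
        have h5 : (κ * τ ^ 2) * R ^ 2 ≤ 1 * R ^ 2 := by gcongr
        linarith [sq_nonneg R]
    rw [le_div_iff₀ hρ]
    have : (|τ| * ρ) ^ 2 ≤ (4 * R) ^ 2 := by rw [mul_pow, sq_abs]; linarith
    exact le_of_sq_le_sq this (by positivity))
  rw [Finset.card_image_of_injective _ (mul_right_injective g⁻¹)] at hc
  refine hc.trans (le_of_eq ?_)
  field_simp
  norm_num

lemma caseB (H : HU Γ u δ κ) (hmin : ∀ a ∈ Γ, InA κ a → a 0 1 ≠ 0 → δ ≤ |a 0 1|)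
    (R : ℝ) (hR : 1 ≤ R) (s : Finset SL2) (hs : ∀ g ∈ s, g ∈ Γ ∧ 2 < |tr g| ∧ N g ≤ R ^ 2) :
    (s.card : ℝ) ≤ 14560 * R ^ 2 := by
  have hδ := H.dpos
  have hδ1 := H.dlt
  have hκ := H.kpos
  have hκ1 := H.kle
  have hlow : ∀ g ∈ s, 1 / (4 * δ ^ 2) ≤ TS κ g := by
    intro g hg
    by_contra hc
    push Not at hc
    have hq : Q δ κ g < 1 / 4 := by
      rw [Q_eq]
      have p1 : 0 ≤ s11 κ g := by unfold s11; positivity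
      have : κ * s11 κ g ≤ 1 * s11 κ g := by gcongr
      have : κ * s11 κ g + s22 κ g - 2 * κ ≤ TS κ g := by unfold TS; linarith
      calc _ ≤ δ ^ 2 * TS κ g := by gcongr
        _ < δ ^ 2 * (1 / (4 * δ ^ 2)) := by gcongr
        _ = 1 / 4 := by field_simp
    obtain ⟨h1, h2⟩ := Jf H (hs g hg).1 hq
    linarith [not_hyp hκ h1 h2, (hs g hg).2.1]
  have h64 : (64 : ℝ) ≤ 1 / (4 * δ ^ 2) := by
    rw [le_div_iff₀ (by positivity)]; nlinarith
  have hup : ∀ g ∈ s, TS κ g ≤ R ^ 2 := by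
    intro g hg
    have := (hs g hg).2.2
    unfold N at this
    unfold TS s11 s22
    have i1 : κ * g 0 1 ^ 2 ≤ 1 * g 0 1 ^ 2 := by gcongr
    have i2 : κ * g 1 1 ^ 2 ≤ 1 * g 1 1 ^ 2 := by gcongr
    linarith
  have main := dyadic s (fun g => √(TS κ g)) R (7280 * R) (by positivity) hR
    (fun g hg => ⟨by
        rw [Real.one_le_sqrt]; linarith [hlow g hg], by
        rw [Real.sqrt_le_left (by linarith)]; exact hup g hg⟩) (by
      intro ρ hρ t hts ht
      have hρ0 : 0 < ρ := by linarith
      rcases t.eq_empty_or_nonempty with h0 | ⟨g0, hg0⟩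
      · rw [h0]; simp; positivity
      have t1 : ∀ g ∈ t, ρ ^ 2 ≤ TS κ g := fun g hg => (Real.le_sqrt' hρ0).1 (ht g hg).1 
      have t2 : ∀ g ∈ t, TS κ g ≤ 4 * ρ ^ 2 := by
        intro g hg
        have := (Real.sqrt_le_left (by positivity)).1 (ht g hg).2
        linarith
      have hρR : ρ ≤ R := by
        have := (t1 g0 hg0).trans (hup g0 (hts hg0))
        exact le_of_sq_le_sq this (by linarith)
      have hδρ : 1 ≤ δ * ρ ^ 2 := by
        have h := (hlow g0 (hts hg0)).trans (t2 g0 hg0)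
        rw [div_le_iff₀ (by positivity)] at h
        have : 0 < δ * ρ ^ 2 := by positivity
        nlinarith
      have b := pigeon t (al κ) (-Real.pi) Real.pi (1 / (8 * δ * ρ ^ 2)) (112 * (R / (ρ * δ)))
        (by positivity) (by positivity) (by linarith [Real.pi_pos])
        (fun g hg => ⟨(Complex.neg_pi_lt_arg _).le, Complex.arg_le_pi _⟩) (by
          intro t' ht' hal
          apply fiber H hmin R ρ hρ0 hρR t' (fun g hg => ⟨(hs g (hts (ht' hg))).1, (hs g (hts (ht' hg))).2.2⟩)
            (fun g hg => t1 g (ht' hg))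
          intro g hg k hk
          exact close_Q hδ hδ1 hκ hκ1 ρ hρ0 g k (t1 g (ht' hg)) (t2 g (ht' hg)) (t1 k (ht' hk))
            (t2 k (ht' hk)) (hal g hg k hk))
      have e1 : (Real.pi - -Real.pi) / (1 / (8 * δ * ρ ^ 2)) + 1 ≤ 65 * (δ * ρ ^ 2) := by
        rw [div_div_eq_mul_div, div_one]
        have := Real.pi_le_four
        have : 0 < δ * ρ ^ 2 := by positivity
        nlinarith
      calc (t.card : ℝ) ≤ _ := b
        _ ≤ 65 * (δ * ρ ^ 2) * (112 * (R / (ρ * δ))) := by gcongr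
        _ = _ := by field_simp; norm_num)
  linarith
end B
/-- the conjugate subgroup `k⁻¹ Γ k` -/
def cj (k : SL2) (Γ : Subgroup SL2) : Subgroup SL2 := Γ.comap (MulAut.conj k).toMonoidHom

lemma mem_cj {k h : SL2} {Γ : Subgroup SL2} : h ∈ cj k Γ ↔ k * h * k⁻¹ ∈ Γ := Iff.rfl

lemma N_nonneg (g : SL2) : 0 ≤ N g := by unfold N; positivity

lemma N_mul (g h : SL2) : N (g * h) ≤ N g * N h := by
  unfold N
  rw [mul00, mul01, mul10, mul11]
  nlinarith [sq_nonneg (g 0 0 * h 1 0 - g 0 1 * h 0 0), sq_nonneg (g 0 0 * h 1 1 - g 0 1 * h 0 1),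
    sq_nonneg (g 1 0 * h 1 0 - g 1 1 * h 0 0), sq_nonneg (g 1 0 * h 1 1 - g 1 1 * h 0 1)]

lemma N_inv (g : SL2) : N g⁻¹ = N g := by
  unfold N
  rw [inv00, inv01, inv10, inv11]; ring

lemma tr_conj (k h : SL2) : tr (k * h * k⁻¹) = tr h := by
  have := det1 k
  unfold tr
  rw [mul00, mul11, mul00, mul01, mul10, mul11, inv00, inv01, inv10, inv11]
  linear_combination (h 0 0 + h 1 1) * this

lemma tr_conj' (k h : SL2) : tr (k⁻¹ * h * k) = tr h := by
  have := tr_conj k⁻¹ h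
  rwa [inv_inv] at this

lemma finB_cj (k : SL2) {Γ : Subgroup SL2} (h : FinB Γ) : FinB (cj k Γ) := by
  intro R
  have := h (N k * R * N k)
  refine (this.preimage (f := fun x => k * x * k⁻¹) ?_).subset ?_
  · intro a _ b _ hab
    simpa using hab
  · rintro x ⟨hx, hR⟩
    refine ⟨hx, ?_⟩
    calc N (k * x * k⁻¹) ≤ N (k * x) * N k⁻¹ := N_mul _ _
      _ ≤ (N k * N x) * N k := by
        rw [N_inv]; exact mul_le_mul_of_nonneg_right (N_mul _ _) (N_nonneg _)
      _ ≤ N k * R * N k := by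
        apply mul_le_mul_of_nonneg_right _ (N_nonneg _)
        exact mul_le_mul_of_nonneg_left hR (N_nonneg _)

/-- `N` in terms of trace and antisymmetric part -/
lemma N_asym (g : SL2) : N g = tr g ^ 2 - 2 + (g 0 1 - g 1 0) ^ 2 := by
  have := det1 g
  unfold N tr
  linear_combination (-2) * this

lemma N_sym (g : SL2) : N g = 2 + (g 0 0 - g 1 1) ^ 2 + (g 0 1 + g 1 0) ^ 2 := by
  have := det1 g
  unfold N
  linear_combination 2 * this

noncomputable def rot (θ : ℝ) : SL2 :=
  ⟨!![Real.cos θ, -Real.sin θ; Real.sin θ, Real.cos θ], by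
    rw [Matrix.det_fin_two_of]; nlinarith [Real.sin_sq_add_cos_sq θ]⟩

lemma rot00 (θ : ℝ) : rot θ 0 0 = Real.cos θ := rfl
lemma rot01 (θ : ℝ) : rot θ 0 1 = -Real.sin θ := rfl
lemma rot10 (θ : ℝ) : rot θ 1 0 = Real.sin θ := rfl
lemma rot11 (θ : ℝ) : rot θ 1 1 = Real.cos θ := rfl

lemma rot_asym (θ : ℝ) (g : SL2) :
    (rot θ * g * (rot θ)⁻¹) 0 1 - (rot θ * g * (rot θ)⁻¹) 1 0 = g 0 1 - g 1 0 := by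
  rw [mul01, mul10, mul00, mul01, mul10, mul11, inv00, inv01, inv10, inv11, rot00, rot01, rot10, rot11]
  linear_combination (g 0 1 - g 1 0) * Real.sin_sq_add_cos_sq θ

lemma rot_N (θ : ℝ) (g : SL2) : N (rot θ * g * (rot θ)⁻¹) = N g := by
  rw [N_asym, N_asym, tr_conj, rot_asym]

lemma rot_p (θ : ℝ) (g : SL2) :
    (rot θ * g * (rot θ)⁻¹) 0 0 - (rot θ * g * (rot θ)⁻¹) 1 1 =
      (g 0 0 - g 1 1) * Real.cos (2 * θ) - (g 0 1 + g 1 0) * Real.sin (2 * θ) := by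
  rw [mul00, mul11, mul00, mul01, mul10, mul11, inv00, inv01, inv10, inv11, rot00, rot01, rot10, rot11,
    Real.cos_two_mul', Real.sin_two_mul]
  ring

lemma rot_q (θ : ℝ) (g : SL2) :
    (rot θ * g * (rot θ)⁻¹) 0 1 + (rot θ * g * (rot θ)⁻¹) 1 0 =
      (g 0 0 - g 1 1) * Real.sin (2 * θ) + (g 0 1 + g 1 0) * Real.cos (2 * θ) := by
  rw [mul01, mul10, mul00, mul01, mul10, mul11, inv00, inv01, inv10, inv11, rot00, rot01, rot10, rot11,
    Real.cos_two_mul', Real.sin_two_mul]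
  ring

lemma exists_rot (g : SL2) : ∃ θ : ℝ,
    (rot θ * g * (rot θ)⁻¹) 0 0 = (rot θ * g * (rot θ)⁻¹) 1 1 ∧
    0 ≤ (rot θ * g * (rot θ)⁻¹) 0 1 + (rot θ * g * (rot θ)⁻¹) 1 0 := by
  let w : ℂ := ⟨g 0 0 - g 1 1, g 0 1 + g 1 0⟩
  have hc : ‖w‖ * Real.cos w.arg = g 0 0 - g 1 1 := Complex.norm_mul_cos_arg w
  have hs : ‖w‖ * Real.sin w.arg = g 0 1 + g 1 0 := Complex.norm_mul_sin_arg w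
  refine ⟨(Real.pi / 2 - w.arg) / 2, ?_, ?_⟩
  · rw [← sub_eq_zero, rot_p, ← hc, ← hs, mul_div_cancel₀ _ (two_ne_zero), Real.cos_pi_div_two_sub,
      Real.sin_pi_div_two_sub]
    ring
  · rw [rot_q, ← hc, ← hs, mul_div_cancel₀ _ (two_ne_zero), Real.cos_pi_div_two_sub,
      Real.sin_pi_div_two_sub]
    nlinarith [Real.sin_sq_add_cos_sq w.arg, norm_nonneg w,
      mul_nonneg (norm_nonneg w) (add_nonneg (sq_nonneg (Real.cos w.arg)) (sq_nonneg (Real.sin w.arg)))]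

lemma core (Γ : Subgroup SL2) (hF : FinB Γ) (σ : ℝ) (hσ : 0 < σ) (hσ1 : σ ≤ 1)
    (hyp : ∀ h ∈ Γ, 2 < |tr h| → σ ^ 2 ≤ N h - 2) (R : ℝ) (hR : 1 ≤ R) (s : Finset SL2)
    (hs : ∀ g ∈ s, g ∈ Γ ∧ 2 < |tr g| ∧ N g ≤ R ^ 2) :
    (s.card : ℝ) ≤ 10 ^ 9 * R ^ 2 / σ ^ 2 := by
  by_cases ell : ∀ h ∈ Γ, |tr h| ≤ 2 → |h 0 1 - h 1 0| < 1 / 16 →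
      h 0 1 = 0 ∧ h 1 0 = 0 ∧ h 0 0 = h 1 1
  · exact caseA Γ σ hσ hσ1 hyp ell R hR s (fun g hg => ⟨(hs g hg).1, (hs g hg).2.2⟩)
  let E : Set SL2 := {h | h ∈ Γ ∧ |tr h| ≤ 2 ∧ |h 0 1 - h 1 0| < 1 / 16 ∧ h 0 1 - h 1 0 ≠ 0}
  have trsq : ∀ h : SL2, |tr h| ≤ 2 → tr h ^ 2 ≤ 4 := by
    intro h hh
    have := sq_le_sq' (by linarith [abs_nonneg (tr h)]) hh
    rw [sq_abs] at this
    linarith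
  have hE : E.Finite := by
    refine (hF 3).subset ?_
    rintro h ⟨h1, h2, h3, _⟩
    refine ⟨h1, ?_⟩
    rw [N_asym]
    have h4 := trsq h h2
    have h5 : (h 0 1 - h 1 0) ^ 2 ≤ 1 := by
      rw [sq_le_one_iff_abs_le_one]; linarith
    linarith
  have hne : E.Nonempty := by
    push Not at ell
    obtain ⟨h, h1, h2, h3, h4⟩ := ell
    refine ⟨h, h1, h2, h3, ?_⟩
    intro h0
    have e1 := N_asym h
    have e2 := N_sym h
    have e3 := trsq h h2
    rw [h0] at e1
    have p0 : h 0 0 - h 1 1 = 0 := by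
      apply pow_eq_zero_iff (two_ne_zero) |>.1
      nlinarith [sq_nonneg (h 0 0 - h 1 1), sq_nonneg (h 0 1 + h 1 0)]
    have q0 : h 0 1 + h 1 0 = 0 := by
      apply pow_eq_zero_iff (two_ne_zero) |>.1
      nlinarith [sq_nonneg (h 0 0 - h 1 1), sq_nonneg (h 0 1 + h 1 0)]
    exact h4 (by linarith) (by linarith) (by linarith)
  obtain ⟨u0, hu0, hmin0⟩ := Set.exists_min_image E (fun h => |h 0 1 - h 1 0|) hE hne
  -- choose orientation
  obtain ⟨u, huΓ, hutr, hulo, hupos, humin⟩ : ∃ u : SL2, u ∈ Γ ∧ |tr u| ≤ 2 ∧ u 0 1 - u 1 0 < 1 / 16 ∧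
      0 < u 0 1 - u 1 0 ∧ ∀ h ∈ E, u 0 1 - u 1 0 ≤ |h 0 1 - h 1 0| := by
    obtain ⟨h1, h2, h3, h4⟩ := hu0
    rcases lt_or_gt_of_ne h4 with h5 | h5
    · refine ⟨u0⁻¹, Γ.inv_mem h1, ?_, ?_, ?_, ?_⟩
      · unfold tr at *; rw [inv00, inv11, add_comm]; exact h2
      · rw [inv01, inv10]; rw [abs_of_neg h5] at h3; linarith
      · rw [inv01, inv10]; linarith
      · intro h hh
        have := hmin0 h hh
        beta_reduce at this
        rw [abs_of_neg h5] at this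
        rw [inv01, inv10]; linarith
    · refine ⟨u0, h1, h2, ?_, h5, ?_⟩
      · rwa [abs_of_pos h5] at h3
      · intro h hh
        have := hmin0 h hh
        beta_reduce at this
        rwa [abs_of_pos h5] at this
  obtain ⟨θ, ht1, ht2⟩ := exists_rot u
  have as1 := rot_asym θ u
  have tr1 := tr_conj (rot θ) u
  have mem1 : rot θ * u * (rot θ)⁻¹ ∈ cj (rot θ)⁻¹ Γ := by
    rw [mem_cj]; simpa [mul_assoc] using huΓ
  set v := rot θ * u * (rot θ)⁻¹ with hv
  have hb : 0 < v 0 1 := by linarith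
  have hc : v 1 0 ≤ 0 := by
    have e := det1 v
    have e3 := trsq u hutr
    rw [← tr1] at e3
    unfold tr at e3
    rw [ht1] at e e3
    by_contra hcc
    push Not at hcc
    nlinarith [mul_pos hb hcc]
  have H : HU (cj (rot θ)⁻¹ Γ) v (v 0 1) (-v 1 0 / v 0 1) :=
    { fin := finB_cj _ hF
      mem := mem1
      e1 := rfl
      e2 := by field_simp
      e3 := ht1
      dpos := hb
      dlt := by linarith
      kpos := div_nonneg (by linarith) hb.le
      kle := by rw [div_le_one hb]; linarith }
  have hκ := H.kpos
  have hδκ : v 0 1 * (1 + -v 1 0 / v 0 1) = u 0 1 - u 1 0 := by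
    rw [← as1]; field_simp; ring
  have hmin : ∀ a ∈ cj (rot θ)⁻¹ Γ, InA (-v 1 0 / v 0 1) a → a 0 1 ≠ 0 → v 0 1 ≤ |a 0 1| := by
    intro a ha hA ha0
    by_contra hcon
    push Not at hcon
    have h1 := not_hyp hκ hA.1 hA.2
    have mem2 : (rot θ)⁻¹ * a * rot θ ∈ Γ := by
      have := mem_cj.1 ha
      rwa [inv_inv] at this
    have as2 := rot_asym θ ((rot θ)⁻¹ * a * rot θ)
    have e : rot θ * ((rot θ)⁻¹ * a * rot θ) * (rot θ)⁻¹ = a := by group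
    rw [e] at as2
    have e2 : a 0 1 - a 1 0 = a 0 1 * (1 + -v 1 0 / v 0 1) := by
      have := hA.2
      rw [this]; ring
    have e3 : |a 0 1 - a 1 0| = |a 0 1| * (1 + -v 1 0 / v 0 1) := by
      rw [e2, abs_mul, abs_of_nonneg (by linarith : 0 ≤ 1 + -v 1 0 / v 0 1)]
    have e4 : |a 0 1 - a 1 0| < u 0 1 - u 1 0 := by
      rw [e3, ← hδκ]
      exact mul_lt_mul_of_pos_right hcon (by linarith)
    have := humin ((rot θ)⁻¹ * a * rot θ) ⟨mem2, by rw [tr_conj']; exact h1, by rw [← as2]; linarith, by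
      rw [← as2, e2]
      exact mul_ne_zero ha0 (by linarith)⟩
    rw [← as2] at this
    linarith
  have inj : Function.Injective (fun g : SL2 => rot θ * g * (rot θ)⁻¹) := by
    intro a b hab
    simpa using hab
  have cB := caseB H hmin R hR (s.map ⟨_, inj⟩) (by
    intro g hg
    simp only [Finset.mem_map, Function.Embedding.coeFn_mk] at hg
    obtain ⟨g', hg', rfl⟩ := hg
    obtain ⟨h1, h2, h3⟩ := hs g' hg'
    refine ⟨?_, by rwa [tr_conj], by rwa [rot_N]⟩
    rw [mem_cj]; simpa [mul_assoc] using h1)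
  rw [Finset.card_map] at cB
  refine cB.trans ?_
  rw [le_div_iff₀ (by positivity)]
  have : σ ^ 2 ≤ 1 := by nlinarith
  nlinarith [sq_nonneg R, mul_le_mul_of_nonneg_left this (sq_nonneg R)]

lemma dist_I (g : SL2) : 2 * Real.cosh (dist UpperHalfPlane.I (g • UpperHalfPlane.I)) = N g := by
  have hd := det1 g
  have hpos : 0 < g 1 0 ^ 2 + g 1 1 ^ 2 := by
    by_contra h
    push Not at h
    have h1 : g 1 0 = 0 := by nlinarith [sq_nonneg (g 1 0), sq_nonneg (g 1 1)]
    have h2 : g 1 1 = 0 := by nlinarith [sq_nonneg (g 1 0), sq_nonneg (g 1 1)]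
    rw [h1, h2] at hd; norm_num at hd
  have hw : ((g • UpperHalfPlane.I : UpperHalfPlane) : ℂ) =
      ⟨(g 0 0 * g 1 0 + g 0 1 * g 1 1) / (g 1 0 ^ 2 + g 1 1 ^ 2), 1 / (g 1 0 ^ 2 + g 1 1 ^ 2)⟩ := by
    rw [UpperHalfPlane.coe_specialLinearGroup_apply]
    rw [div_eq_iff]
    · apply Complex.ext
      · simp
        field_simp
        linear_combination (-g 1 0) * hd
      · simp
        field_simp
        linear_combination (g 1 1) * hd
    · intro h
      have h1 := congrArg Complex.re h
      have h2 := congrArg Complex.im h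
      simp at h1 h2
      rw [h1, h2] at hpos
      norm_num at hpos
  have hre : (g • UpperHalfPlane.I : UpperHalfPlane).re =
    (g 0 0 * g 1 0 + g 0 1 * g 1 1) / (g 1 0 ^ 2 + g 1 1 ^ 2) := congrArg Complex.re hw
  have him : (g • UpperHalfPlane.I : UpperHalfPlane).im =
    1 / (g 1 0 ^ 2 + g 1 1 ^ 2) := congrArg Complex.im hw
  rw [UpperHalfPlane.cosh_dist', hre, him, UpperHalfPlane.I_re, UpperHalfPlane.I_im]
  have hL : (g 0 0 * g 1 0 + g 0 1 * g 1 1) ^ 2 + 1 =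
      (g 0 0 ^ 2 + g 0 1 ^ 2) * (g 1 0 ^ 2 + g 1 1 ^ 2) := by
    linear_combination (-(g 0 0 * g 1 1 - g 0 1 * g 1 0 + 1)) * hd
  unfold N
  generalize g 0 0 * g 1 0 + g 0 1 * g 1 1 = p at *
  have e : g 0 0 ^ 2 + g 0 1 ^ 2 + g 1 0 ^ 2 + g 1 1 ^ 2 =
      (g 0 0 ^ 2 + g 0 1 ^ 2) + (g 1 0 ^ 2 + g 1 1 ^ 2) := by ring
  rw [e]
  generalize g 1 0 ^ 2 + g 1 1 ^ 2 = D at *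
  generalize g 0 0 ^ 2 + g 0 1 ^ 2 = A at *
  field_simp
  linear_combination hL

lemma two_cosh (x : ℝ) (hx : 0 ≤ x) : 2 + x ^ 2 ≤ 2 * Real.cosh x := by
  have h1 := Real.cosh_two_mul (x / 2)
  have h2 := Real.cosh_sq (x / 2)
  have h3 : x / 2 ≤ Real.sinh (x / 2) := Real.self_le_sinh_iff.2 (by linarith)
  rw [mul_div_cancel₀ _ (two_ne_zero)] at h1
  nlinarith

lemma cosh_le_exp (x : ℝ) (hx : 0 ≤ x) : Real.cosh x ≤ Real.exp x := by
  rw [Real.cosh_eq]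
  have : Real.exp (-x) ≤ Real.exp x := Real.exp_le_exp.2 (by linarith)
  linarith

lemma dist_conj (k g : SL2) :
    dist (k • UpperHalfPlane.I) (g • k • UpperHalfPlane.I) =
      dist UpperHalfPlane.I ((k⁻¹ * g * k) • UpperHalfPlane.I) := by
  rw [← dist_smul k UpperHalfPlane.I, smul_smul, smul_smul]
  congr 2
  group

end CH

/-- **Counting hyperbolic elements (Lemma 6.2 of the paper).** There is a universal
constant `C > 0` with the following property. Let `Γ` be a discrete subgroup of
`SL(2, ℝ)`, acting on the upper half-plane by Möbius transformations, and let
`H = {γ ∈ Γ : |tr γ| > 2}` be its set of hyperbolic elements. If the systole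
`s = inf {d(z, γ·z) : z ∈ ℍ, γ ∈ H}` is positive, then for every `z ∈ ℍ` and `j > 0` the
set `{γ ∈ H : d(z, γ·z) ≤ j}` is finite with cardinality at most `C * e^j / min 1 s²`. -/
theorem counting_hyperbolic_elements :
    ∃ C : ℝ, 0 < C ∧
      ∀ (Γ : Subgroup (Matrix.SpecialLinearGroup (Fin 2) ℝ)), DiscreteTopology Γ →
        ∀ s : ℝ,
          s = sInf {d : ℝ | ∃ (z : UpperHalfPlane) (γ : Matrix.SpecialLinearGroup (Fin 2) ℝ),
              γ ∈ Γ ∧ 2 < |Matrix.trace (γ : Matrix (Fin 2) (Fin 2) ℝ)| ∧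
              d = dist z (γ • z)} →
          0 < s →
          ∀ (z : UpperHalfPlane) (j : ℝ), 0 < j →
            ({γ : Matrix.SpecialLinearGroup (Fin 2) ℝ |
                γ ∈ Γ ∧ 2 < |Matrix.trace (γ : Matrix (Fin 2) (Fin 2) ℝ)| ∧
                dist z (γ • z) ≤ j}).Finite ∧
            (Nat.card {γ : Matrix.SpecialLinearGroup (Fin 2) ℝ //
                γ ∈ Γ ∧ 2 < |Matrix.trace (γ : Matrix (Fin 2) (Fin 2) ℝ)| ∧
                dist z (γ • z) ≤ j} : ℝ) ≤ C * Real.exp j / min 1 (s ^ 2) := by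
  refine ⟨2 * 10 ^ 9, by norm_num, ?_⟩
  intro Γ hΓ s hs hs0 z j hj
  have hF : CH.FinB Γ := CH.finB_of_discrete Γ hΓ
  obtain ⟨k, rfl⟩ := MulAction.exists_smul_eq (Matrix.SpecialLinearGroup (Fin 2) ℝ) UpperHalfPlane.I z
  have hF' := CH.finB_cj k hF
  -- translate the counted set to the base point
  have key : ∀ g : CH.SL2, dist (k • UpperHalfPlane.I) (g • k • UpperHalfPlane.I) ≤ j →
      CH.N (k⁻¹ * g * k) ≤ 2 * Real.exp j := by
    intro g hg
    rw [CH.dist_conj] at hg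
    rw [← CH.dist_I]
    have h1 := CH.cosh_le_exp _ (dist_nonneg (x := UpperHalfPlane.I)
      (y := (k⁻¹ * g * k) • UpperHalfPlane.I))
    have h2 := Real.exp_le_exp.2 hg
    linarith
  have inj : Function.Injective (fun g : CH.SL2 => k⁻¹ * g * k) := by
    intro a b hab
    simpa using hab
  have hmem : ∀ g : CH.SL2, g ∈ Γ → k⁻¹ * g * k ∈ CH.cj k Γ := by
    intro g hg
    rw [CH.mem_cj]
    simpa [mul_assoc] using hg
  have hfin : ({γ : Matrix.SpecialLinearGroup (Fin 2) ℝ |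
                γ ∈ Γ ∧ 2 < |Matrix.trace (γ : Matrix (Fin 2) (Fin 2) ℝ)| ∧
                dist (k • UpperHalfPlane.I) (γ • k • UpperHalfPlane.I) ≤ j}).Finite := by
    refine ((hF' (2 * Real.exp j)).preimage (f := fun g : CH.SL2 => k⁻¹ * g * k)
      inj.injOn).subset ?_
    rintro g ⟨h1, _, h3⟩
    exact ⟨hmem g h1, key g h3⟩
  refine ⟨hfin, ?_⟩
  set σ : ℝ := min 1 s with hσ
  have hσ0 : 0 < σ := lt_min one_pos hs0
  have hσ2 : min 1 (s ^ 2) = σ ^ 2 := by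
    rcases le_total 1 s with h | h
    · rw [hσ, min_eq_left h, min_eq_left (by nlinarith)]; norm_num
    · rw [hσ, min_eq_right h, min_eq_right (by nlinarith)]
  have hyp : ∀ h ∈ CH.cj k Γ, 2 < |CH.tr h| → σ ^ 2 ≤ CH.N h - 2 := by
    intro h hh htr
    have h1 : s ≤ dist UpperHalfPlane.I (h • UpperHalfPlane.I) := by
      rw [hs]
      refine csInf_le ⟨0, ?_⟩ ⟨k • UpperHalfPlane.I, k * h * k⁻¹, hh, ?_, ?_⟩
      · rintro _ ⟨_, _, _, _, rfl⟩
        exact dist_nonneg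
      · rw [CH.trace_eq, CH.tr_conj]; exact htr
      · rw [CH.dist_conj]
        congr 2
        group
    have h2 := CH.two_cosh _ (dist_nonneg (x := UpperHalfPlane.I) (y := h • UpperHalfPlane.I))
    rw [CH.dist_I] at h2
    have h3 : σ ≤ s := min_le_right _ _
    nlinarith
  have hexp : 1 ≤ Real.exp j := Real.one_le_exp hj.le
  have hR2 : Real.sqrt (2 * Real.exp j) ^ 2 = 2 * Real.exp j := Real.sq_sqrt (by linarith)
  have hR : 1 ≤ Real.sqrt (2 * Real.exp j) := by
    rw [Real.one_le_sqrt]; linarith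
  have hc := CH.core (CH.cj k Γ) hF' σ hσ0 (min_le_left _ _) hyp _ hR
    (hfin.toFinset.map ⟨_, inj⟩) (by
      intro g hg
      simp only [Finset.mem_map, Function.Embedding.coeFn_mk] at hg
      obtain ⟨g', hg', rfl⟩ := hg
      rw [Set.Finite.mem_toFinset] at hg'
      obtain ⟨h1, h2, h3⟩ := hg'
      refine ⟨hmem g' h1, ?_, ?_⟩
      · rw [CH.tr_conj', ← CH.trace_eq]; exact h2
      · rw [hR2]; exact key g' h3)
  rw [Finset.card_map, hR2] at hc
  have hcard : Nat.card {γ : Matrix.SpecialLinearGroup (Fin 2) ℝ //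
                γ ∈ Γ ∧ 2 < |Matrix.trace (γ : Matrix (Fin 2) (Fin 2) ℝ)| ∧
                dist (k • UpperHalfPlane.I) (γ • k • UpperHalfPlane.I) ≤ j} = hfin.toFinset.card :=
    Nat.card_eq_card_finite_toFinset hfin
  rw [hcard, hσ2]
  refine hc.trans (le_of_eq ?_)
  ring
end

section
/- There exists a universal constant C > 0 with the following property. Let Γ be a countable subgroup of SL(2,ℝ) acting freely on ℍ by Möbius transformations (γ·z = z for some z ∈ ℍ implies γ = 1), and let F ⊆ ℍ be a measurable fundamental domain for this action with respect to the hyperbolic area measure μ (the translates γ·F, γ ∈ Γ, are pairwise μ-a.e. disjoint and their union covers ℍ up to a μ-null set). Let K : ℍ × ℍ → ℝ be a bounded measurable kernel invariant under the diagonal action of Γ, i.e. K(γ·z, γ·w) = K(z,w) for all γ ∈ Γ and all z, w ∈ ℍ. Fix R > 0 and ε > 0 and assume: (i) K(z,w) = 0 whenever d(z,w) > R; (ii) for every w ∈ ℍ such that K(z,w) ≠ 0 for some z ∈ ℍ, and every γ ∈ Γ with γ ≠ 1, one has d(w, γ·w) ≥ 2ε. Then ∫_F ∫_F |Σ_{γ∈Γ}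 K(z, γ·w)|² dμ(w) dμ(z) ≤ ∫_F ∫_ℍ |K(z,w)|² dμ(w) dμ(z) + C · (e^{2R} / min{1, ε²}) · μ(F_{≤R}) · sup_{(z,w)∈F×ℍ} |K(z,w)|², where F_{≤R} := {z ∈ F : there exists γ ∈ Γ, γ ≠ 1, with d(z, γ·z) ≤ 2R}. -/
open MeasureTheory UpperHalfPlane

/-- The Borel measurable structure on the upper half-plane, induced from `ℂ`. -/
noncomputable instance : MeasurableSpace UpperHalfPlane :=
  MeasurableSpace.comap ((↑) : ℍ → ℂ) inferInstance

/-- The hyperbolic area measure on the upper half-plane: the measure with density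
`(Im z)⁻²` with respect to the two-dimensional Lebesgue measure. -/
noncomputable def hypArea : Measure ℍ :=
  (Measure.comap ((↑) : ℍ → ℂ) volume).withDensity
    (fun z => ENNReal.ofReal (1 / z.im ^ 2))


theorem hypArea_eq : hypArea = (volume : Measure ℍ) := by
  rw [UpperHalfPlane.volume_def]
  unfold hypArea
  congr 1
  funext z
  rw [ENNReal.ofReal]
  congr 1
  ext
  simp [z.im_pos.le]

theorem hypArea_sFinite : SFinite hypArea := by
  rw [hypArea_eq]; exact (inferInstance : SFinite (volume : Measure ℍ))

theorem mp_smul (g : Matrix.SpecialLinearGroup (Fin 2) ℝ) :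
    MeasurePreserving (fun z : ℍ => g • z) hypArea hypArea := by
  rw [hypArea_eq]
  exact measurePreserving_smul (g : GL (Fin 2) ℝ) (volume : Measure ℍ)

theorem me_smul (g : Matrix.SpecialLinearGroup (Fin 2) ℝ) :
    MeasurableEmbedding (fun z : ℍ => g • z) :=
  measurableEmbedding_const_smul (g : GL (Fin 2) ℝ)

theorem hypArea_apply (s : Set ℍ) :
    hypArea s = ∫⁻ z : ℂ in (↑) '' s, ENNReal.ofReal (1 / z.im ^ 2) := by
  rw [hypArea_eq]
  refine (UpperHalfPlane.volume_eq_lintegral s).trans ?_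
  congr 1
  funext z
  rw [ENNReal.ofReal]
  congr 1
  ext
  simp [Real.coe_toNNReal', sq_nonneg]

theorem lower_ball (w : ℍ) {ε : ℝ} (h0 : 0 < ε) (h1 : ε ≤ 1) :
    ENNReal.ofReal (ε ^ 2 * Real.exp (-2)) ≤ hypArea (Metric.ball w ε) := by
  rw [hypArea_apply]
  have hy := w.im_pos
  have key : ∀ z ∈ ((↑) : ℍ → ℂ) '' (Metric.ball w ε),
      ENNReal.ofReal (Real.exp (-2) / w.im ^ 2) ≤ ENNReal.ofReal (1 / z.im ^ 2) := by
    rintro _ ⟨z, hz, rfl⟩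
    apply ENNReal.ofReal_le_ofReal
    have h2 : z.im ≤ w.im * Real.exp 1 :=
      (UpperHalfPlane.im_le_im_mul_exp_dist z w).trans (by
        gcongr; exact (Metric.mem_ball.1 hz).le.trans h1)
    have hz0 := z.im_pos
    have : z.im ^ 2 ≤ w.im ^ 2 * Real.exp 2 := by
      calc z.im ^ 2 ≤ (w.im * Real.exp 1) ^ 2 := by gcongr
        _ = _ := by rw [mul_pow, ← Real.exp_nat_mul]; norm_num
    rw [UpperHalfPlane.coe_im, Real.exp_neg, div_le_div_iff₀ (by positivity) (by positivity)]
    rw [inv_mul_le_iff₀ (by positivity)]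
    linarith
  have hms : MeasurableSet (((↑) : ℍ → ℂ) '' (Metric.ball w ε)) := by
    rw [UpperHalfPlane.image_coe_ball]; exact measurableSet_ball
  refine le_trans ?_ (setLIntegral_mono' hms key)
  rw [setLIntegral_const, UpperHalfPlane.image_coe_ball, Complex.volume_ball]
  have hs : ε ≤ Real.sinh ε := Real.self_le_sinh_iff.2 h0.le
  have hpi : (1 : ENNReal) ≤ (NNReal.pi : ENNReal) := by
    have : (1 : NNReal) ≤ NNReal.pi := by
      rw [← NNReal.coe_le_coe]; simpa using (by linarith [Real.pi_gt_three] : (1 : ℝ) ≤ Real.pi)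
    exact_mod_cast this
  calc ENNReal.ofReal (ε ^ 2 * Real.exp (-2))
      = ENNReal.ofReal (Real.exp (-2) / w.im ^ 2) * (ENNReal.ofReal (w.im * ε) ^ 2 * 1) := by
        rw [mul_one, ← ENNReal.ofReal_pow (by positivity), ← ENNReal.ofReal_mul (by positivity)]
        congr 1
        field_simp
    _ ≤ _ := by gcongr

theorem lint_aux {a : ℝ} (ha : 0 < a) {c : ℝ} (hc : 0 ≤ c) :
    ∫⁻ y in Set.Ioi a, ENNReal.ofReal (c * y ^ (-3 / 2 : ℝ)) = ENNReal.ofReal (2 * c / √a) := by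
  have hi : IntegrableOn (fun y : ℝ => c * y ^ (-3 / 2 : ℝ)) (Set.Ioi a) :=
    (integrableOn_Ioi_rpow_of_lt (by norm_num) ha).const_mul c
  rw [← ofReal_integral_eq_lintegral_ofReal hi]
  · congr 1
    rw [integral_const_mul, integral_Ioi_rpow_of_lt (by norm_num) ha, Real.sqrt_eq_rpow]
    have : ((-3 / 2 : ℝ) + 1) = -(1/2) := by norm_num
    rw [this, Real.rpow_neg ha.le]
    field_simp
  · filter_upwards [ae_restrict_mem measurableSet_Ioi] with y hy
    have : 0 < y := ha.trans hy
    positivity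

theorem upper_ball (w : ℍ) (R : ℝ) :
    hypArea (Metric.closedBall w R) ≤ ENNReal.ofReal (4 * Real.exp R) := by
  have hy := w.im_pos
  set a : ℝ := w.im * Real.exp (-R) with ha
  have ha0 : 0 < a := by positivity
  set h : ℝ → ℝ := fun y => Real.exp (R / 2) * √(y * w.im) with hh
  set T : Set (ℝ × ℝ) := {p | a ≤ p.2 ∧ |p.1 - w.re| ≤ h p.2} with hT
  have hTm : MeasurableSet T := by
    apply MeasurableSet.inter
    · exact measurableSet_le measurable_const measurable_snd
    · have h1 : Measurable (fun p : ℝ × ℝ => |p.1 - w.re|) :=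
        (measurable_fst.sub_const _).abs
      have h2 : Measurable (fun p : ℝ × ℝ => h p.2) := by
        rw [hh]; fun_prop
      exact measurableSet_le h1 h2
  set G : ℝ × ℝ → ENNReal := T.indicator (fun p => ENNReal.ofReal (1 / p.2 ^ 2)) with hG
  have hGm : Measurable G := Measurable.indicator (by fun_prop) hTm
  have hsub : ∀ z ∈ ((↑) : ℍ → ℂ) '' (Metric.closedBall w R), (z.re, z.im) ∈ T := by
    rintro _ ⟨z, hz, rfl⟩
    rw [Metric.mem_closedBall] at hz
    have hz0 := z.im_pos
    constructor
    · have := UpperHalfPlane.im_le_im_mul_exp_dist w z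
      rw [dist_comm] at this
      have h3 : w.im ≤ z.im * Real.exp R := this.trans (by gcongr)
      show a ≤ z.im
      rw [ha, Real.exp_neg, ← div_eq_mul_inv, div_le_iff₀ (Real.exp_pos _)]
      exact h3
    · have h3 := UpperHalfPlane.dist_le_iff_le_sinh.1 hz
      have h4 : Real.sinh (R / 2) ≤ Real.exp (R / 2) / 2 := by
        rw [Real.sinh_eq]; linarith [Real.exp_pos (-(R / 2))]
      have h5 := h3.trans h4
      rw [div_le_iff₀ (by positivity)] at h5
      show |z.re - w.re| ≤ Real.exp (R / 2) * √(z.im * w.im)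
      have h6 : |z.re - w.re| ≤ dist (z : ℂ) w := by
        rw [Complex.dist_eq]
        simpa using Complex.abs_re_le_norm ((z : ℂ) - w)
      linarith
  calc hypArea (Metric.closedBall w R)
      = ∫⁻ z : ℂ in (↑) '' (Metric.closedBall w R), ENNReal.ofReal (1 / z.im ^ 2) := hypArea_apply _
    _ ≤ ∫⁻ z : ℂ in ((↑) : ℍ → ℂ) '' (Metric.closedBall w R), G (z.re, z.im) := by
        refine setLIntegral_mono' ?_ ?_
        · rw [UpperHalfPlane.image_coe_closedBall]; exact measurableSet_closedBall
        · intro z hz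
          rw [hG, Set.indicator_of_mem (hsub z hz)]
    _ ≤ ∫⁻ z : ℂ, G (z.re, z.im) := setLIntegral_le_lintegral _ _
    _ = ∫⁻ p : ℝ × ℝ, G p :=
        Complex.volume_preserving_equiv_real_prod.lintegral_comp hGm
    _ = ∫⁻ y : ℝ, ∫⁻ x : ℝ, G (x, y) := by
        rw [Measure.volume_eq_prod, lintegral_prod_symm' _ hGm]
    _ ≤ ∫⁻ y : ℝ, (Set.Ici a).indicator
          (fun y => ENNReal.ofReal ((2 * Real.exp (R / 2) * √w.im) * y ^ (-3 / 2 : ℝ))) y := by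
        refine lintegral_mono fun y => ?_
        by_cases hya : a ≤ y
        · have hy0 : 0 < y := ha0.trans_le hya
          rw [Set.indicator_of_mem (Set.mem_Ici.2 hya)]
          have : ∀ x, G (x, y) ≤ (Set.Icc (w.re - h y) (w.re + h y)).indicator
              (fun _ => ENNReal.ofReal (1 / y ^ 2)) x := by
            intro x
            by_cases hx : (x, y) ∈ T
            · have hx2 : |x - w.re| ≤ h y := hx.2
              rw [abs_le] at hx2
              rw [hG, Set.indicator_of_mem hx,
                Set.indicator_of_mem (Set.mem_Icc.2 ⟨by linarith, by linarith⟩)]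
            · rw [hG, Set.indicator_of_notMem hx]
              exact zero_le
          refine (lintegral_mono this).trans ?_
          rw [lintegral_indicator_const measurableSet_Icc, Real.volume_Icc,
            ← ENNReal.ofReal_mul (by positivity)]
          apply ENNReal.ofReal_le_ofReal
          have : y ^ (-3 / 2 : ℝ) = √y / y ^ 2 := by
            rw [Real.sqrt_eq_rpow, ← Real.rpow_natCast, ← Real.rpow_sub hy0]; norm_num
          rw [this, hh]
          simp only
          rw [Real.sqrt_mul hy0.le]
          apply le_of_eq
          ring
        · have : ∀ x, G (x, y) = 0 := fun x => Set.indicator_of_notMem (fun hx => hya hx.1) _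
          simp [this]
    _ = ENNReal.ofReal (2 * (2 * Real.exp (R / 2) * √w.im) / √a) := by
        rw [lintegral_indicator measurableSet_Ici, ← restrict_Ioi_eq_restrict_Ici,
          lint_aux ha0 (by positivity)]
    _ = ENNReal.ofReal (4 * Real.exp R) := by
        congr 1
        have h1 : √a = √w.im * Real.exp (-R / 2) := by
          rw [ha, Real.sqrt_mul hy.le, Real.exp_half]
        have h2 : Real.exp R = Real.exp (R/2) * Real.exp (R/2) := by
          rw [← Real.exp_add]; ring_nf
        have h3 : Real.exp (-R / 2) = (Real.exp (R/2))⁻¹ := by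
          rw [← Real.exp_neg]; ring_nf
        have : 0 < √w.im := Real.sqrt_pos.2 hy
        rw [h1, h2, h3]
        field_simp
        norm_num

theorem unfold_le {Γ : Subgroup (Matrix.SpecialLinearGroup (Fin 2) ℝ)} [Countable Γ]
    {F : Set ℍ} (hF : MeasurableSet F)
    (hd : ∀ γ ∈ Γ, ∀ γ' ∈ Γ, γ ≠ γ' →
            hypArea ((fun z => γ • z) '' F ∩ (fun z => γ' • z) '' F) = 0)
    (f : ℍ → ENNReal) (hf : Measurable f) :
    ∫⁻ w in F, ∑' γ : Γ, f ((γ : Matrix.SpecialLinearGroup (Fin 2) ℝ) • w) ∂hypArea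
      ≤ ∫⁻ w, f w ∂hypArea := by
  have h0 : ∀ γ : Γ, Measurable
      (fun w : ℍ => f ((γ : Matrix.SpecialLinearGroup (Fin 2) ℝ) • w)) :=
    fun γ => hf.comp (me_smul γ.1).measurable
  rw [lintegral_tsum (fun γ => (h0 γ).aemeasurable)]
  have h1 : ∀ γ : Γ, ∫⁻ w in F, f ((γ : Matrix.SpecialLinearGroup (Fin 2) ℝ) • w) ∂hypArea
      = ∫⁻ w in (fun z : ℍ => γ.1 • z) '' F, f w ∂hypArea := fun γ =>
    ((mp_smul γ.1).setLIntegral_comp_emb (me_smul γ.1) f F)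
  simp_rw [h1]
  rw [← lintegral_iUnion₀]
  · exact setLIntegral_le_lintegral _ _
  · exact fun γ => ((me_smul γ.1).measurableSet_image.2 hF).nullMeasurableSet
  · intro γ γ' hne
    exact hd γ γ.2 γ' γ'.2 (fun h => hne (Subtype.ext h))

theorem count_bound {ι : Type*} (p : ι → ℍ) (z : ℍ) {R ε : ℝ} (hε : 0 < ε) (T : Finset ι)
    (h1 : ∀ i ∈ T, dist z (p i) ≤ R)
    (h2 : ∀ i ∈ T, ∀ j ∈ T, i ≠ j → 2 * ε ≤ dist (p i) (p j)) :
    (T.card : ℝ) ≤ 4 * Real.exp 3 * (Real.exp R / min 1 (ε ^ 2)) := by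
  set e := min 1 ε with he
  have he0 : 0 < e := lt_min one_pos hε
  have he2 : min 1 (ε ^ 2) = e ^ 2 := by
    rcases le_total 1 ε with h | h
    · rw [he, min_eq_left h, min_eq_left (by nlinarith)]; norm_num
    · rw [he, min_eq_right h, min_eq_right (by nlinarith)]
  have hdis : (T : Set ι).PairwiseDisjoint (fun i => Metric.ball (p i) e) := by
    intro i hi j hj hij
    apply Metric.ball_disjoint_ball
    have := h2 i hi j hj hij
    have : e ≤ ε := min_le_right _ _
    linarith
  have hsub : (⋃ i ∈ T, Metric.ball (p i) e) ⊆ Metric.closedBall z (R + 1) := by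
    intro x hx
    simp only [Set.mem_iUnion] at hx
    obtain ⟨i, hi, hx⟩ := hx
    have := h1 i hi
    have h3 : e ≤ 1 := min_le_left _ _
    rw [Metric.mem_ball] at hx
    rw [Metric.mem_closedBall]
    have := dist_triangle x (p i) z
    rw [dist_comm z] at *
    linarith
  have hm := (measure_mono (μ := hypArea) hsub).trans (upper_ball z (R + 1))
  rw [measure_biUnion_finset hdis (fun i _ => measurableSet_ball)] at hm
  have hm2 : (T.card : ENNReal) * ENNReal.ofReal (e ^ 2 * Real.exp (-2))
      ≤ ENNReal.ofReal (4 * Real.exp (R + 1)) := by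
    refine le_trans ?_ hm
    rw [← nsmul_eq_mul]
    exact Finset.card_nsmul_le_sum _ _ _ (fun i _ => lower_ball _ he0 (min_le_left _ _))
  rw [← ENNReal.ofReal_natCast, ← ENNReal.ofReal_mul (by positivity),
    ENNReal.ofReal_le_ofReal_iff (by positivity)] at hm2
  rw [he2, mul_div_assoc', le_div_iff₀ (by positivity)]
  have h4 : Real.exp (-2) * Real.exp 2 = 1 := by rw [← Real.exp_add]; simp
  have h5 : 4 * Real.exp 3 * Real.exp R = 4 * Real.exp (R + 1) * Real.exp 2 := by
    rw [mul_assoc, mul_assoc, ← Real.exp_add, ← Real.exp_add]; ring_nf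
  rw [h5]
  calc (T.card : ℝ) * e ^ 2 = T.card * (e ^ 2 * Real.exp (-2)) * Real.exp 2 := by
        rw [mul_assoc, mul_assoc, h4, mul_one]
    _ ≤ _ := by gcongr

/-- Cauchy–Schwarz for sums with boundedly many nonzero terms. -/
theorem tsum_sq_bound {ι : Type*} (f : ι → ℝ) (N : ℝ)
    (h : ∀ T : Finset ι, (∀ i ∈ T, f i ≠ 0) → (T.card : ℝ) ≤ N) :
    ENNReal.ofReal ((∑' i, f i) ^ 2) ≤ ENNReal.ofReal N * ∑' i, ENNReal.ofReal ((f i) ^ 2) := by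
  have hfin : (Function.support f).Finite := by
    by_contra hinf
    obtain ⟨n, hn⟩ := exists_nat_gt N
    obtain ⟨t, ht, hc⟩ := (show (Function.support f).Infinite from hinf).exists_subset_card_eq n
    have := h t (fun i hi => ht hi)
    rw [hc] at this
    linarith
  set T := hfin.toFinset with hT
  have hsupp : ∀ i ∉ T, f i = 0 := fun i hi => by simpa [hT] using hi
  have hN : (T.card : ℝ) ≤ N := h T (fun i hi => by simpa [hT] using hi)
  have hN0 : 0 ≤ N := le_trans (by positivity) hN
  rw [tsum_eq_sum hsupp]
  calc ENNReal.ofReal ((∑ i ∈ T, f i) ^ 2) ≤ ENNReal.ofReal (N * ∑ i ∈ T, f i ^ 2) := by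
        apply ENNReal.ofReal_le_ofReal
        refine sq_sum_le_card_mul_sum_sq.trans ?_
        gcongr
    _ = ENNReal.ofReal N * ∑ i ∈ T, ENNReal.ofReal (f i ^ 2) := by
        rw [ENNReal.ofReal_mul hN0, ENNReal.ofReal_sum_of_nonneg (fun i _ => sq_nonneg _)]
    _ ≤ _ := by gcongr; exact ENNReal.sum_le_tsum T

/-- **Hilbert–Schmidt norm bound for invariant kernels (Lemma 3.5 of the paper).**
There is a universal constant `C > 0` such that: for every countable subgroup `Γ` of
`SL(2, ℝ)` acting freely on the upper half-plane, every measurable fundamental domain `F`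
for the action (translates pairwise a.e. disjoint, union covering up to a null set), every
bounded measurable `Γ`-invariant kernel `K` supported within distance `R` of the diagonal,
such that every point `w` in the support of `K` satisfies `d(w, γ·w) ≥ 2ε` for all
`γ ∈ Γ \ {1}`, the squared Hilbert–Schmidt norm of the induced operator is bounded by
`∫_F ∫_ℍ K² + C (e^{2R} / min 1 ε²) μ(F_{≤R}) sup K²`. -/
theorem hilbert_schmidt_norm_bound :
    ∃ C : ℝ, 0 < C ∧
      ∀ (Γ : Subgroup (Matrix.SpecialLinearGroup (Fin 2) ℝ)), Countable Γ →
        (∀ γ ∈ Γ, (∃ z : UpperHalfPlane, γ • z = z) → γ = 1) →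
        ∀ F : Set UpperHalfPlane, MeasurableSet F →
          (∀ γ ∈ Γ, ∀ γ' ∈ Γ, γ ≠ γ' →
            hypArea ((fun z => γ • z) '' F ∩ (fun z => γ' • z) '' F) = 0) →
          hypArea (⋃ γ ∈ Γ, (fun z => γ • z) '' F)ᶜ = 0 →
          ∀ K : UpperHalfPlane → UpperHalfPlane → ℝ,
            Measurable (Function.uncurry K) →
            (∃ M : ℝ, ∀ z w, |K z w| ≤ M) →
            (∀ γ ∈ Γ, ∀ z w : UpperHalfPlane, K (γ • z) (γ • w) = K z w) →
            ∀ R ε : ℝ, 0 < R → 0 < ε →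
              (∀ z w : UpperHalfPlane, R < dist z w → K z w = 0) →
              (∀ w : UpperHalfPlane, (∃ z, K z w ≠ 0) →
                ∀ γ ∈ Γ, γ ≠ 1 → 2 * ε ≤ dist w (γ • w)) →
              (∫⁻ z in F, ∫⁻ w in F,
                  ENNReal.ofReal
                    ((∑' γ : Γ, K z ((γ : Matrix.SpecialLinearGroup (Fin 2) ℝ) • w)) ^ 2)
                  ∂hypArea ∂hypArea) ≤
                (∫⁻ z in F, ∫⁻ w,
                    ENNReal.ofReal ((K z w) ^ 2) ∂hypArea ∂hypArea) +
                  ENNReal.ofReal (C * (Real.exp (2 * R) / min 1 (ε ^ 2)) *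
                      sSup {y : ℝ | ∃ z ∈ F, ∃ w : UpperHalfPlane, y = (K z w) ^ 2}) *
                    hypArea {z ∈ F | ∃ γ ∈ Γ, γ ≠ 1 ∧ dist z (γ • z) ≤ 2 * R} := by
  refine ⟨16 * Real.exp 3, by positivity, ?_⟩
  intro Γ hΓ hfree F hF hd _ K hK hbdd hinv R ε hR hε hsupp hsep
  haveI := hypArea_sFinite
  obtain ⟨M, hM⟩ := hbdd
  set S : ℝ := sSup {y : ℝ | ∃ z ∈ F, ∃ w : UpperHalfPlane, y = (K z w) ^ 2} with hS
  set B : Set ℍ := {z ∈ F | ∃ γ ∈ Γ, γ ≠ 1 ∧ dist z (γ • z) ≤ 2 * R} with hB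
  set N : ℝ := 4 * Real.exp 3 * (Real.exp R / min 1 (ε ^ 2)) with hN
  have hmin : 0 < min 1 (ε ^ 2) := lt_min one_pos (by positivity)
  have hN0 : 0 ≤ N := by positivity
  have hKS : ∀ z ∈ F, ∀ w, (K z w) ^ 2 ≤ S := by
    intro z hz w
    apply le_csSup
    · refine ⟨M ^ 2, ?_⟩
      rintro _ ⟨z, -, w, rfl⟩
      exact sq_le_sq' (abs_le.1 (hM z w)).1 (abs_le.1 (hM z w)).2
    · exact ⟨z, hz, w, rfl⟩
  -- geometric facts about nonvanishing terms
  have hne_dist : ∀ z w, K z w ≠ 0 → dist z w ≤ R := fun z w h => by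
    by_contra hc
    exact h (hsupp z w (not_le.1 hc))
  have hsepΓ : ∀ (z w : ℍ) (γ γ' : Γ), K z (γ.1 • w) ≠ 0 → γ ≠ γ' →
      2 * ε ≤ dist (γ.1 • w) (γ'.1 • w) := by
    intro z w γ γ' h hne
    have h1 := hsep (γ.1 • w) ⟨z, h⟩ (γ'.1 * γ.1⁻¹) (Γ.mul_mem γ'.2 (Γ.inv_mem γ.2))
      (fun h => hne (Subtype.ext (mul_inv_eq_one.1 h).symm))
    rwa [mul_smul, inv_smul_smul] at h1
  have hcount : ∀ (z w : ℍ) (T : Finset Γ), (∀ γ ∈ T, K z (γ.1 • w) ≠ 0) →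
      (T.card : ℝ) ≤ N := by
    intro z w T hT
    exact count_bound (fun γ : Γ => γ.1 • w) z hε T (fun γ h => hne_dist _ _ (hT γ h))
      (fun γ h γ' _ hne => hsepΓ z w γ γ' (hT γ h) hne)
  have hcount1 : ∀ (z w : ℍ), w ∈ F → w ∉ B → ∀ (T : Finset Γ),
      (∀ γ ∈ T, K z (γ.1 • w) ≠ 0) → (T.card : ℝ) ≤ 1 := by
    intro z w hwF hwB T hT
    have : T.card ≤ 1 := by
      rw [Finset.card_le_one]
      intro γ hγ γ' hγ'
      by_contra hne
      apply hwB
      refine ⟨hwF, γ.1⁻¹ * γ'.1, Γ.mul_mem (Γ.inv_mem γ.2) γ'.2,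
        fun h => hne (Subtype.ext (inv_mul_eq_one.1 h)), ?_⟩
      have h1 := hne_dist _ _ (hT γ hγ)
      have h2 := hne_dist _ _ (hT γ' hγ')
      have h3 : dist w ((γ.1⁻¹ * γ'.1) • w) = dist (γ.1 • w) (γ'.1 • w) := by
        rw [← dist_smul γ.1 w, mul_smul, smul_inv_smul]
      rw [h3]
      have := dist_triangle_left (γ.1 • w) (γ'.1 • w) z
      linarith
    exact_mod_cast this
  -- the sum of squares
  set Q : ℍ → ℍ → ENNReal := fun z w => ∑' γ : Γ, ENNReal.ofReal ((K z (γ.1 • w)) ^ 2) with hQ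
  have hQm : Measurable (Function.uncurry Q) := by
    refine Measurable.ennreal_tsum fun γ => ?_
    have h1 : Measurable (fun p : ℍ × ℍ => (p.1, γ.1 • p.2)) :=
      measurable_fst.prodMk ((me_smul γ.1).measurable.comp measurable_snd)
    exact ((hK.comp h1).pow_const 2).ennreal_ofReal
  have hBm : MeasurableSet B := by
    have : B = F ∩ ⋃ γ : Γ, {z : ℍ | γ ≠ 1 ∧ dist z (γ.1 • z) ≤ 2 * R} := by
      ext z
      simp only [hB, Set.mem_setOf_eq, Set.mem_inter_iff, Set.mem_iUnion, Subtype.exists, ne_eq,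
        Subgroup.mk_eq_one, exists_prop]
    rw [this]
    refine hF.inter (MeasurableSet.iUnion fun γ => ?_)
    refine (MeasurableSet.const _).inter ?_
    exact measurableSet_le (measurable_id.dist (me_smul γ.1).measurable) measurable_const
  have hpt : ∀ z, ∀ w ∈ F, ENNReal.ofReal ((∑' γ : Γ, K z (γ.1 • w)) ^ 2) ≤
      Q z w + B.indicator (fun w => ENNReal.ofReal N * Q z w) w := by
    intro z w hw
    by_cases hwB : w ∈ B
    · rw [Set.indicator_of_mem hwB]
      exact (tsum_sq_bound _ N (hcount z w)).trans le_add_self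
    · refine (tsum_sq_bound _ 1 (hcount1 z w hw hwB)).trans ?_
      rw [ENNReal.ofReal_one, one_mul]
      exact le_self_add
  have hQz : ∀ z, Measurable (Q z) := fun z => hQm.comp measurable_prodMk_left
  have hQint : ∀ z, ∫⁻ w in F, Q z w ∂hypArea ≤
      ∫⁻ w, ENNReal.ofReal ((K z w) ^ 2) ∂hypArea := by
    intro z
    exact unfold_le hF hd (fun w => ENNReal.ofReal ((K z w) ^ 2))
      ((hK.comp measurable_prodMk_left).pow_const 2).ennreal_ofReal
  -- the integral in the other variable
  have hQint2 : ∀ w, ∫⁻ z in F, Q z w ∂hypArea ≤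
      ENNReal.ofReal S * ENNReal.ofReal (4 * Real.exp R) := by
    intro w
    have hind : Measurable ((Metric.closedBall w R).indicator (fun _ => (1 : ENNReal))) :=
      measurable_const.indicator measurableSet_closedBall
    have h1 : ∀ z ∈ F, Q z w ≤ ENNReal.ofReal S *
        ∑' γ : Γ, (Metric.closedBall w R).indicator (fun _ => (1 : ENNReal)) (γ.1 • z) := by
      intro z hz
      rw [← (Equiv.inv Γ).tsum_eq, ← ENNReal.tsum_mul_left]
      refine ENNReal.tsum_le_tsum fun γ => ?_
      by_cases h0 : K z (γ.1 • w) = 0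
      · simp [h0]
      · have h2 := hne_dist _ _ h0
        have h3 : ((Equiv.inv Γ γ : Γ) : Matrix.SpecialLinearGroup (Fin 2) ℝ) • z
            ∈ Metric.closedBall w R := by
          rw [Metric.mem_closedBall, ← dist_smul γ.1]
          simpa using h2
        rw [Set.indicator_of_mem h3, mul_one]
        exact ENNReal.ofReal_le_ofReal (hKS z hz _)
    calc ∫⁻ z in F, Q z w ∂hypArea
        ≤ ∫⁻ z in F, ENNReal.ofReal S * ∑' γ : Γ,
          (Metric.closedBall w R).indicator (fun _ => (1 : ENNReal)) (γ.1 • z) ∂hypArea :=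
          setLIntegral_mono' hF h1
      _ = ENNReal.ofReal S * ∫⁻ z in F, ∑' γ : Γ,
          (Metric.closedBall w R).indicator (fun _ => (1 : ENNReal)) (γ.1 • z) ∂hypArea :=
          lintegral_const_mul' _ _ ENNReal.ofReal_ne_top
      _ ≤ ENNReal.ofReal S * ∫⁻ z, (Metric.closedBall w R).indicator (fun _ => (1 : ENNReal)) z
            ∂hypArea := by
          exact mul_le_mul_right (unfold_le hF hd _ hind) _
      _ ≤ _ := by
          rw [lintegral_indicator_const measurableSet_closedBall, one_mul]
          gcongr
          exact upper_ball w R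
  have hBF : B ⊆ F := fun z hz => hz.1
  calc ∫⁻ z in F, ∫⁻ w in F, ENNReal.ofReal ((∑' γ : Γ, K z (γ.1 • w)) ^ 2) ∂hypArea ∂hypArea
      ≤ ∫⁻ z in F, (∫⁻ w, ENNReal.ofReal ((K z w) ^ 2) ∂hypArea +
          ∫⁻ w in B, ENNReal.ofReal N * Q z w ∂hypArea) ∂hypArea := by
        refine lintegral_mono fun z => ?_
        refine (setLIntegral_mono' hF (hpt z)).trans ?_
        rw [lintegral_add_left (hQz z)]
        refine add_le_add (hQint z) ?_
        rw [lintegral_indicator hBm]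
        exact lintegral_mono' (Measure.restrict_mono le_rfl Measure.restrict_le_self) le_rfl
    _ = ∫⁻ z in F, ∫⁻ w, ENNReal.ofReal ((K z w) ^ 2) ∂hypArea ∂hypArea +
          ∫⁻ z in F, ∫⁻ w in B, ENNReal.ofReal N * Q z w ∂hypArea ∂hypArea := by
        apply lintegral_add_left
        exact Measurable.lintegral_prod_right (hK.pow_const 2).ennreal_ofReal
    _ ≤ _ := by
        gcongr
        rw [lintegral_lintegral_swap (hQm.const_mul _).aemeasurable]
        have h1 : ∀ w, ∫⁻ z in F, ENNReal.ofReal N * Q z w ∂hypArea ≤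
            ENNReal.ofReal (16 * Real.exp 3 * (Real.exp (2 * R) / min 1 (ε ^ 2)) * S) := by
          intro w
          rw [lintegral_const_mul' _ _ ENNReal.ofReal_ne_top]
          refine (mul_le_mul_right (hQint2 w) _).trans (le_of_eq ?_)
          rw [← ENNReal.ofReal_mul' (by positivity), ← ENNReal.ofReal_mul hN0]
          congr 1
          rw [hN, two_mul R, Real.exp_add]
          ring
        refine (lintegral_mono h1).trans ?_
        rw [setLIntegral_const]
end
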